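/- arXiv:2004.13135 — 3 statements merged into one kernel-verified Lean document; each statement's English description precedes it below -/
import Mathlib

section
/- Let χ(μ) = Ψ_λ(ρ_κ(ζ)) where μ = (κ, λ), λ = (C, d) ranges over {λ : ‖λ‖ < D} and Ψ_λ(x) = ψ(Cx + d). Assume κ ↦ ρ_κ(ζ) is Lipschitz with constant L₁, κ ↦ ∇ρ_κ(ζ) is Lipschitz with constant L₂, ‖ρ_κ(ζ)‖ ≤ B₁ and ‖∇ρ_κ(ζ)‖ ≤ B₂ for all κ. Then the full gradient ∇χ (with respect to μ = (κ, λ)) is Lipschitz continuous with constant √(m₁ + m₂), where m₁ = max{ 3L₁²(c₁²n₃ + c₂²D²B₁²) + 2c₂²D²L₁² , c₂²(B₁² + 1)(3B₁² + 2) } and m₂ = (n₃c₁DL₂ + B₂c₂D²L₁)² + B₂²(n₃c₁ + Dc₂(B₁² + 1)^{1/2})². -/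
open scoped BigOperators

/-- Frobenius-type norm of a vector. -/
noncomputable def vnorm {n : ℕ} (v : Fin n → ℝ) : ℝ := Real.sqrt (∑ i, (v i) ^ 2)

/-- Frobenius-type norm of a matrix. -/
noncomputable def mnorm {m n : ℕ} (A : Fin m → Fin n → ℝ) : ℝ :=
  Real.sqrt (∑ i, ∑ j, (A i j) ^ 2)

/-- Pre-activation C_{i,·}·ρ_κ(ζ) + d_i. -/
noncomputable def preact {n₁ n₂ n₃ l₁ : ℕ}
    (ρ : (Fin l₁ → ℝ) → (Fin n₁ → ℝ) → Fin n₂ → ℝ) (ζ : Fin n₁ → ℝ)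
    (κ : Fin l₁ → ℝ) (C : Fin n₃ → Fin n₂ → ℝ) (d : Fin n₃ → ℝ) (i : Fin n₃) : ℝ :=
  ∑ j, C i j * ρ κ ζ j + d i

/-- Partial derivatives of χ with respect to the entries of C. -/
noncomputable def gradChiC {n₁ n₂ n₃ l₁ : ℕ} (ψ : ℝ → ℝ)
    (ρ : (Fin l₁ → ℝ) → (Fin n₁ → ℝ) → Fin n₂ → ℝ) (ζ : Fin n₁ → ℝ)
    (κ : Fin l₁ → ℝ) (C : Fin n₃ → Fin n₂ → ℝ) (d : Fin n₃ → ℝ) :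
    Fin n₃ → Fin n₃ → Fin n₂ → ℝ :=
  fun k i j => if k = i then deriv ψ (preact ρ ζ κ C d i) * ρ κ ζ j else 0

/-- Partial derivatives of χ with respect to the entries of d. -/
noncomputable def gradChiD {n₁ n₂ n₃ l₁ : ℕ} (ψ : ℝ → ℝ)
    (ρ : (Fin l₁ → ℝ) → (Fin n₁ → ℝ) → Fin n₂ → ℝ) (ζ : Fin n₁ → ℝ)
    (κ : Fin l₁ → ℝ) (C : Fin n₃ → Fin n₂ → ℝ) (d : Fin n₃ → ℝ) :
    Fin n₃ → Fin n₃ → ℝ :=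
  fun k i => if k = i then deriv ψ (preact ρ ζ κ C d i) else 0

/-- The κ-partial gradient (∂/∂κ)χ(μ) = Ψ′_λ(ρ_κ(ζ))·∇ρ_κ(ζ). -/
noncomputable def gradChiKappa {n₁ n₂ n₃ l₁ : ℕ} (ψ : ℝ → ℝ)
    (ρ : (Fin l₁ → ℝ) → (Fin n₁ → ℝ) → Fin n₂ → ℝ)
    (J : (Fin l₁ → ℝ) → Fin n₂ → Fin l₁ → ℝ) (ζ : Fin n₁ → ℝ)
    (κ : Fin l₁ → ℝ) (C : Fin n₃ → Fin n₂ → ℝ) (d : Fin n₃ → ℝ) :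
    Fin n₃ → Fin l₁ → ℝ :=
  fun k a => ∑ j, (deriv ψ (preact ρ ζ κ C d k) * C k j) * J κ j a

/-!
Put `s = ψ'(C ρ_κ(ζ) + d)`. The blocks of `∇χ` with respect to `d`, `C` and `κ` are `diag s`, the
outer product of `s` and `ρ_κ(ζ)`, and `diag s * C * ∇ρ_κ(ζ)`. Each is multilinear in `s`,
`ρ_κ(ζ)`, `C`, `∇ρ_κ(ζ)`, so its increment telescopes into products with a single increment as a
factor, which the submultiplicative Frobenius norm estimates. The increment of `s` is controlled
by the Lipschitz constant of `ψ'` and, by Cauchy-Schwarz, by those of the affine map. The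
`λ`-blocks are bounded in squared form and give `m₁`; the `κ`-block is bounded linearly in
`‖κ - κ'‖` and `‖λ - λ'‖`, and Cauchy-Schwarz turns this into `m₂`. The factor `n₃` in `m₂` comes
from `‖diag s‖ ≤ √n₃ c₁ ≤ n₃ c₁`.
-/

lemma sqrt_natCast_le (n : ℕ) : √(n : ℝ) ≤ n :=
  Real.sqrt_le_iff.2 ⟨n.cast_nonneg, by exact_mod_cast Nat.le_self_pow two_ne_zero n⟩

lemma mul_add_mul_sq_le (a b x y : ℝ) :
    (a * x + b * y) ^ 2 ≤ (a ^ 2 + b ^ 2) * (x ^ 2 + y ^ 2) := by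
  linarith [sq_nonneg (a * y - b * x)]

lemma add_add_sq_le (a b c : ℝ) : (a + b + c) ^ 2 ≤ 3 * (a ^ 2 + b ^ 2 + c ^ 2) := by
  linarith [sq_nonneg (a - b), sq_nonneg (b - c), sq_nonneg (a - c)]

lemma sqrt_sq_add_le {g q a b p r t δ : ℝ} (hg : 0 ≤ g) (hg_le : g ≤ a * t + b * δ)
    (hq : q ≤ p * t ^ 2 + r * δ ^ 2) :
    √(g ^ 2 + q) ≤ √(max p r + (a ^ 2 + b ^ 2)) * √(t ^ 2 + δ ^ 2) := by
  rw [← Real.sqrt_mul' _ (by positivity)]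
  refine Real.sqrt_le_sqrt ?_
  calc g ^ 2 + q
      ≤ (a * t + b * δ) ^ 2 + (p * t ^ 2 + r * δ ^ 2) := by gcongr
    _ ≤ (a ^ 2 + b ^ 2) * (t ^ 2 + δ ^ 2) + (max p r * t ^ 2 + max p r * δ ^ 2) := by
      gcongr
      exacts [mul_add_mul_sq_le a b t δ, le_max_left p r, le_max_right p r]
    _ = (max p r + (a ^ 2 + b ^ 2)) * (t ^ 2 + δ ^ 2) := by ring

lemma abs_sub_le_of_abs_deriv_le {f : ℝ → ℝ} {c : ℝ} (hf : Differentiable ℝ f)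
    (hc : ∀ x, |deriv f x| ≤ c) (x y : ℝ) : |f x - f y| ≤ c * |x - y| :=
  convex_univ.norm_image_sub_le_of_norm_deriv_le (fun z _ => hf z) (fun z _ => hc z)
    (Set.mem_univ y) (Set.mem_univ x)

section Frobenius

open WithLp (toLp)
open scoped Matrix Matrix.Norms.Frobenius

variable {𝕜 k l m n : Type*} [RCLike 𝕜] [Fintype k] [Fintype l] [Fintype m] [Fintype n]

lemma norm_toLp_mulVec_le (A : Matrix m n 𝕜) (x : n → 𝕜) :
    ‖toLp 2 (A *ᵥ x)‖ ≤ ‖A‖ * ‖toLp 2 x‖ := by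
  simpa only [← Matrix.frobenius_norm_replicateCol (ι := Unit), Matrix.replicateCol_mulVec]
    using Matrix.frobenius_norm_mul A (Matrix.replicateCol Unit x)

lemma frobenius_norm_vecMulVec_le (u : m → 𝕜) (v : n → 𝕜) :
    ‖Matrix.vecMulVec u v‖ ≤ ‖toLp 2 u‖ * ‖toLp 2 v‖ := by
  rw [Matrix.vecMulVec_eq Unit, ← Matrix.frobenius_norm_replicateCol (ι := Unit) u,
    ← Matrix.frobenius_norm_replicateRow (ι := Unit) v]
  exact Matrix.frobenius_norm_mul _ _

lemma norm_toLp_le_sqrt_card_mul {s : n → 𝕜} {c : ℝ} (hc : 0 ≤ c) (hs : ∀ i, ‖s i‖ ≤ c) :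
    ‖toLp 2 s‖ ≤ √(Fintype.card n) * c := by
  rw [EuclideanSpace.norm_eq, Real.sqrt_le_left (by positivity), mul_pow,
    Real.sq_sqrt (by positivity)]
  calc ∑ i, ‖s i‖ ^ 2 ≤ ∑ _i : n, c ^ 2 := by gcongr with i; exact hs i
    _ = Fintype.card n * c ^ 2 := by simp

lemma norm_toLp_comp_sub_comp_le {g : 𝕜 → 𝕜} {c : ℝ} (hg : ∀ x y, ‖g x - g y‖ ≤ c * ‖x - y‖)
    (z z' : n → 𝕜) : ‖toLp 2 (g ∘ z - g ∘ z')‖ ≤ c * ‖toLp 2 (z - z')‖ := by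
  have hc : 0 ≤ c := by simpa using (norm_nonneg _).trans (hg 1 0)
  rw [EuclideanSpace.norm_eq, EuclideanSpace.norm_eq, Real.sqrt_le_left (by positivity), mul_pow,
    Real.sq_sqrt (by positivity), Finset.mul_sum]
  gcongr with i
  rw [← mul_pow]
  exact pow_le_pow_left₀ (norm_nonneg _) (hg (z i) (z' i)) 2

lemma norm_toLp_mulVec_add_le (A : Matrix m n 𝕜) (x : n → 𝕜) (b : m → 𝕜) :
    ‖toLp 2 (A *ᵥ x + b)‖ ≤ √(‖toLp 2 x‖ ^ 2 + 1) * √(‖A‖ ^ 2 + ‖toLp 2 b‖ ^ 2) := by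
  calc ‖toLp 2 (A *ᵥ x + b)‖
      ≤ ‖toLp 2 (A *ᵥ x)‖ + ‖toLp 2 b‖ := norm_add_le (toLp 2 _) (toLp 2 _)
    _ ≤ ‖toLp 2 x‖ * ‖A‖ + 1 * ‖toLp 2 b‖ := by linarith [norm_toLp_mulVec_le A x]
    _ ≤ √((‖toLp 2 x‖ ^ 2 + 1) * (‖A‖ ^ 2 + ‖toLp 2 b‖ ^ 2)) :=
      Real.le_sqrt_of_sq_le <| by
        simpa only [one_pow] using mul_add_mul_sq_le ‖toLp 2 x‖ 1 ‖A‖ ‖toLp 2 b‖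
    _ = √(‖toLp 2 x‖ ^ 2 + 1) * √(‖A‖ ^ 2 + ‖toLp 2 b‖ ^ 2) := Real.sqrt_mul (by positivity) _

lemma norm_toLp_affine_sub_affine_le (A A' : Matrix m n 𝕜) (x x' : n → 𝕜) (b b' : m → 𝕜) :
    ‖toLp 2 ((A *ᵥ x + b) - (A' *ᵥ x' + b'))‖ ≤ ‖A‖ * ‖toLp 2 (x - x')‖ +
      √(‖toLp 2 x'‖ ^ 2 + 1) * √(‖A - A'‖ ^ 2 + ‖toLp 2 (b - b')‖ ^ 2) := by
  have hsplit : (A *ᵥ x + b) - (A' *ᵥ x' + b') =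
      A *ᵥ (x - x') + ((A - A') *ᵥ x' + (b - b')) := by
    rw [Matrix.mulVec_sub, Matrix.sub_mulVec]
    abel
  rw [hsplit]
  exact (norm_add_le (toLp 2 (A *ᵥ (x - x'))) _).trans
    (add_le_add (norm_toLp_mulVec_le _ _) (norm_toLp_mulVec_add_le _ _ _))

lemma frobenius_norm_vecMulVec_sub_vecMulVec_le (s s' : m → 𝕜) (x x' : n → 𝕜) :
    ‖Matrix.vecMulVec s x - Matrix.vecMulVec s' x'‖ ≤
      ‖toLp 2 s‖ * ‖toLp 2 (x - x')‖ + ‖toLp 2 (s - s')‖ * ‖toLp 2 x'‖ := by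
  have hsplit : Matrix.vecMulVec s x - Matrix.vecMulVec s' x' =
      Matrix.vecMulVec s (x - x') + Matrix.vecMulVec (s - s') x' := by
    rw [Matrix.vecMulVec_sub, Matrix.sub_vecMulVec]
    abel
  rw [hsplit]
  exact (norm_add_le _ _).trans
    (add_le_add (frobenius_norm_vecMulVec_le _ _) (frobenius_norm_vecMulVec_le _ _))

lemma frobenius_norm_mul_mul_le (A : Matrix k l 𝕜) (B : Matrix l m 𝕜) (C : Matrix m n 𝕜) :
    ‖A * B * C‖ ≤ ‖A‖ * ‖B‖ * ‖C‖ :=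
  (Matrix.frobenius_norm_mul _ _).trans
    (mul_le_mul_of_nonneg_right (Matrix.frobenius_norm_mul _ _) (norm_nonneg _))

lemma frobenius_norm_mul_mul_sub_mul_mul_le (A A' : Matrix k l 𝕜) (B B' : Matrix l m 𝕜)
    (C C' : Matrix m n 𝕜) :
    ‖A * B * C - A' * B' * C'‖ ≤
      ‖A‖ * ‖B‖ * ‖C - C'‖ + ‖A‖ * ‖B - B'‖ * ‖C'‖ + ‖A - A'‖ * ‖B'‖ * ‖C'‖ := by
  have hsplit : A * B * C - A' * B' * C' =
      A * B * (C - C') + A * (B - B') * C' + (A - A') * B' * C' := by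
    simp only [Matrix.mul_sub, Matrix.sub_mul]
    abel
  rw [hsplit]
  exact norm_add₃_le.trans (add_le_add_three (frobenius_norm_mul_mul_le _ _ _)
    (frobenius_norm_mul_mul_le _ _ _) (frobenius_norm_mul_mul_le _ _ _))

end Frobenius

section Norms

open WithLp (toLp)
open scoped Matrix.Norms.Frobenius

variable {m n : ℕ}

lemma vnorm_eq_norm_toLp (v : Fin n → ℝ) : vnorm v = ‖toLp 2 v‖ := by
  simp only [vnorm, EuclideanSpace.norm_eq, Real.norm_eq_abs, sq_abs]

lemma mnorm_eq_frobenius_norm (A : Fin m → Fin n → ℝ) : mnorm A = ‖Matrix.of A‖ := by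
  simp only [mnorm, Matrix.frobenius_norm_def, Matrix.of_apply, Real.norm_eq_abs, Real.rpow_two,
    sq_abs, Real.sqrt_eq_rpow]

lemma vnorm_nonneg (v : Fin n → ℝ) : 0 ≤ vnorm v := Real.sqrt_nonneg _

lemma mnorm_nonneg (A : Fin m → Fin n → ℝ) : 0 ≤ mnorm A := Real.sqrt_nonneg _

lemma vnorm_sq (v : Fin n → ℝ) : vnorm v ^ 2 = ∑ i, v i ^ 2 := Real.sq_sqrt (by positivity)

lemma mnorm_sq (A : Fin m → Fin n → ℝ) : mnorm A ^ 2 = ∑ i, ∑ j, A i j ^ 2 :=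
  Real.sq_sqrt (by positivity)

lemma mnorm_le_sqrt_sq_add_sq (A : Fin m → Fin n → ℝ) (b : ℝ) : mnorm A ≤ √(mnorm A ^ 2 + b ^ 2) :=
  Real.le_sqrt_of_sq_le (le_add_of_nonneg_right (sq_nonneg b))

end Norms

section Gradient

open scoped Matrix Matrix.Norms.Frobenius

variable {n₁ n₂ n₃ l₁ : ℕ} (ψ : ℝ → ℝ) (ρ : (Fin l₁ → ℝ) → (Fin n₁ → ℝ) → Fin n₂ → ℝ)
  (J : (Fin l₁ → ℝ) → Fin n₂ → Fin l₁ → ℝ) (ζ : Fin n₁ → ℝ) (κ κ' : Fin l₁ → ℝ)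
  (C C' : Fin n₃ → Fin n₂ → ℝ) (d d' : Fin n₃ → ℝ)

/-- The vector `ψ'(C ρ_κ(ζ) + d)` of activation slopes, the diagonal of the Jacobian of the
componentwise activation; every block of the gradient of `χ` is built from it. -/
noncomputable def activationSlope : Fin n₃ → ℝ := deriv ψ ∘ preact ρ ζ κ C d

lemma preact_eq_mulVec_add : preact ρ ζ κ C d = Matrix.of C *ᵥ ρ κ ζ + d := rfl

lemma gradChiKappa_eq_diagonal_mul_mul :
    Matrix.of (gradChiKappa ψ ρ J ζ κ C d) =
      Matrix.diagonal (activationSlope ψ ρ ζ κ C d) * Matrix.of C * Matrix.of (J κ) := by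
  ext k a
  rw [Matrix.mul_apply]
  simp only [Matrix.diagonal_mul]
  rfl

lemma sum_gradChiD_sub_sq :
    ∑ k, ∑ i, (gradChiD ψ ρ ζ κ C d k i - gradChiD ψ ρ ζ κ' C' d' k i) ^ 2 =
      vnorm (activationSlope ψ ρ ζ κ C d - activationSlope ψ ρ ζ κ' C' d') ^ 2 := by
  rw [vnorm_sq]
  refine Finset.sum_congr rfl fun k _ => ?_
  rw [Fintype.sum_eq_single k fun i hi => by simp [gradChiD, hi.symm]]
  simp [gradChiD, activationSlope]

lemma sum_gradChiC_sub_sq_le :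
    ∑ k, ∑ i, ∑ j, (gradChiC ψ ρ ζ κ C d k i j - gradChiC ψ ρ ζ κ' C' d' k i j) ^ 2 ≤
      (vnorm (activationSlope ψ ρ ζ κ C d) * vnorm (ρ κ ζ - ρ κ' ζ) +
        vnorm (activationSlope ψ ρ ζ κ C d - activationSlope ψ ρ ζ κ' C' d') *
          vnorm (ρ κ' ζ)) ^ 2 := by
  set s := activationSlope ψ ρ ζ κ C d with hs
  set s' := activationSlope ψ ρ ζ κ' C' d' with hs'
  have hdiag :
      ∑ k, ∑ i, ∑ j, (gradChiC ψ ρ ζ κ C d k i j - gradChiC ψ ρ ζ κ' C' d' k i j) ^ 2 =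
        mnorm (fun k j => s k * ρ κ ζ j - s' k * ρ κ' ζ j) ^ 2 := by
    rw [mnorm_sq]
    refine Finset.sum_congr rfl fun k _ => ?_
    rw [Fintype.sum_eq_single k fun i hi => by simp [gradChiC, hi.symm]]
    simp [gradChiC, hs, hs', activationSlope]
  rw [hdiag, mnorm_eq_frobenius_norm]
  simp only [vnorm_eq_norm_toLp]
  exact pow_le_pow_left₀ (norm_nonneg _)
    (frobenius_norm_vecMulVec_sub_vecMulVec_le s s' (ρ κ ζ) (ρ κ' ζ)) 2

variable {ψ} {c₁ c₂ : ℝ}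

lemma vnorm_activationSlope_le (hc₁ : ∀ x, |deriv ψ x| ≤ c₁) :
    vnorm (activationSlope ψ ρ ζ κ C d) ≤ √n₃ * c₁ := by
  rw [vnorm_eq_norm_toLp]
  simpa only [Fintype.card_fin] using
    norm_toLp_le_sqrt_card_mul ((abs_nonneg _).trans (hc₁ 0)) fun i => hc₁ (preact ρ ζ κ C d i)

lemma vnorm_activationSlope_sub_le (hc₂ : ∀ x y, |deriv ψ x - deriv ψ y| ≤ c₂ * |x - y|) :
    vnorm (activationSlope ψ ρ ζ κ C d - activationSlope ψ ρ ζ κ' C' d') ≤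
      c₂ * (mnorm C * vnorm (ρ κ ζ - ρ κ' ζ) +
        √(vnorm (ρ κ' ζ) ^ 2 + 1) * √(mnorm (C - C') ^ 2 + vnorm (d - d') ^ 2)) := by
  have hc₂_nonneg : 0 ≤ c₂ := by simpa using (abs_nonneg _).trans (hc₂ 1 0)
  simp only [vnorm_eq_norm_toLp, mnorm_eq_frobenius_norm]
  refine (norm_toLp_comp_sub_comp_le hc₂ _ _).trans (mul_le_mul_of_nonneg_left ?_ hc₂_nonneg)
  rw [preact_eq_mulVec_add, preact_eq_mulVec_add]
  exact norm_toLp_affine_sub_affine_le (Matrix.of C) (Matrix.of C') (ρ κ ζ) (ρ κ' ζ) d d'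

lemma mnorm_gradChiKappa_sub_le :
    mnorm (gradChiKappa ψ ρ J ζ κ C d - gradChiKappa ψ ρ J ζ κ' C' d') ≤
      vnorm (activationSlope ψ ρ ζ κ C d) * mnorm C * mnorm (J κ - J κ') +
      vnorm (activationSlope ψ ρ ζ κ C d) * mnorm (C - C') * mnorm (J κ') +
      vnorm (activationSlope ψ ρ ζ κ C d - activationSlope ψ ρ ζ κ' C' d') * mnorm C' *
        mnorm (J κ') := by
  have h := frobenius_norm_mul_mul_sub_mul_mul_le
    (Matrix.diagonal (activationSlope ψ ρ ζ κ C d))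
    (Matrix.diagonal (activationSlope ψ ρ ζ κ' C' d'))
    (Matrix.of C) (Matrix.of C') (Matrix.of (J κ)) (Matrix.of (J κ'))
  rw [Matrix.diagonal_sub, Matrix.frobenius_norm_diagonal, Matrix.frobenius_norm_diagonal,
    ← gradChiKappa_eq_diagonal_mul_mul, ← gradChiKappa_eq_diagonal_mul_mul] at h
  simp only [vnorm_eq_norm_toLp, mnorm_eq_frobenius_norm]
  exact h

variable {ρ J ζ κ κ' C C' d d'} {S D e f B₁ B₂ δ : ℝ}

lemma vnorm_activationSlope_sub_le_of_le
    (hc₂ : ∀ x y, |deriv ψ x - deriv ψ y| ≤ c₂ * |x - y|) (hC : mnorm C ≤ D)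
    (he : vnorm (ρ κ ζ - ρ κ' ζ) ≤ e) (hB₁ : vnorm (ρ κ' ζ) ≤ B₁)
    (hδ : √(mnorm (C - C') ^ 2 + vnorm (d - d') ^ 2) ≤ δ) :
    vnorm (activationSlope ψ ρ ζ κ C d - activationSlope ψ ρ ζ κ' C' d') ≤
      c₂ * (D * e + √(B₁ ^ 2 + 1) * δ) := by
  have hc₂_nonneg : 0 ≤ c₂ := by simpa using (abs_nonneg _).trans (hc₂ 1 0)
  have hD : 0 ≤ D := (mnorm_nonneg C).trans hC
  have hx' := vnorm_nonneg (ρ κ' ζ)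
  have hΔx := vnorm_nonneg (ρ κ ζ - ρ κ' ζ)
  refine (vnorm_activationSlope_sub_le ρ ζ κ κ' C C' d d' hc₂).trans ?_
  gcongr

lemma sum_gradChiC_add_sum_gradChiD_le (hs : vnorm (activationSlope ψ ρ ζ κ C d) ≤ S)
    (hΔs : vnorm (activationSlope ψ ρ ζ κ C d - activationSlope ψ ρ ζ κ' C' d') ≤
      c₂ * (D * e + √(B₁ ^ 2 + 1) * δ))
    (he : vnorm (ρ κ ζ - ρ κ' ζ) ≤ e) (hB₁ : vnorm (ρ κ' ζ) ≤ B₁) :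
    (∑ k, ∑ i, ∑ j, (gradChiC ψ ρ ζ κ C d k i j - gradChiC ψ ρ ζ κ' C' d' k i j) ^ 2) +
        (∑ k, ∑ i, (gradChiD ψ ρ ζ κ C d k i - gradChiD ψ ρ ζ κ' C' d' k i) ^ 2) ≤
      (3 * (S ^ 2 + c₂ ^ 2 * D ^ 2 * B₁ ^ 2) + 2 * c₂ ^ 2 * D ^ 2) * e ^ 2 +
        c₂ ^ 2 * (B₁ ^ 2 + 1) * (3 * B₁ ^ 2 + 2) * δ ^ 2 := by
  have hs₀ := vnorm_nonneg (activationSlope ψ ρ ζ κ C d)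
  have hx₀ := vnorm_nonneg (ρ κ' ζ)
  have hΔx₀ := vnorm_nonneg (ρ κ ζ - ρ κ' ζ)
  have hΔs₀ := vnorm_nonneg (activationSlope ψ ρ ζ κ C d - activationSlope ψ ρ ζ κ' C' d')
  have hR : √(B₁ ^ 2 + 1) ^ 2 = B₁ ^ 2 + 1 := Real.sq_sqrt (by positivity)
  have hsum_C :
      ∑ k, ∑ i, ∑ j, (gradChiC ψ ρ ζ κ C d k i j - gradChiC ψ ρ ζ κ' C' d' k i j) ^ 2 ≤
        3 * ((S * e) ^ 2 + (c₂ * D * e * B₁) ^ 2 + (c₂ * √(B₁ ^ 2 + 1) * δ * B₁) ^ 2) :=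
    calc _ ≤ _ := sum_gradChiC_sub_sq_le ψ ρ ζ κ κ' C C' d d'
      _ ≤ (S * e + c₂ * (D * e + √(B₁ ^ 2 + 1) * δ) * B₁) ^ 2 := by
        have := hs₀.trans hs
        have := hΔs₀.trans hΔs
        gcongr
      _ = (S * e + c₂ * D * e * B₁ + c₂ * √(B₁ ^ 2 + 1) * δ * B₁) ^ 2 := by ring
      _ ≤ _ := add_add_sq_le _ _ _
  have hsum_D :
      ∑ k, ∑ i, (gradChiD ψ ρ ζ κ C d k i - gradChiD ψ ρ ζ κ' C' d' k i) ^ 2 ≤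
        2 * ((c₂ * D * e) ^ 2 + (c₂ * √(B₁ ^ 2 + 1) * δ) ^ 2) :=
    calc _ = _ := sum_gradChiD_sub_sq ψ ρ ζ κ κ' C C' d d'
      _ ≤ (c₂ * (D * e + √(B₁ ^ 2 + 1) * δ)) ^ 2 := by gcongr
      _ = (c₂ * D * e + c₂ * √(B₁ ^ 2 + 1) * δ) ^ 2 := by ring
      _ ≤ _ := add_sq_le
  simp only [mul_pow, hR] at hsum_C hsum_D
  linarith

lemma mnorm_gradChiKappa_sub_le_of_le (hs : vnorm (activationSlope ψ ρ ζ κ C d) ≤ S)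
    (hΔs : vnorm (activationSlope ψ ρ ζ κ C d - activationSlope ψ ρ ζ κ' C' d') ≤
      c₂ * (D * e + √(B₁ ^ 2 + 1) * δ))
    (hC : mnorm C ≤ D) (hC' : mnorm C' ≤ D) (hΔC : mnorm (C - C') ≤ δ)
    (hf : mnorm (J κ - J κ') ≤ f) (hB₂ : mnorm (J κ') ≤ B₂) :
    mnorm (gradChiKappa ψ ρ J ζ κ C d - gradChiKappa ψ ρ J ζ κ' C' d') ≤
      S * (D * f + B₂ * δ) + c₂ * (D * e + √(B₁ ^ 2 + 1) * δ) * D * B₂ := by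
  have hs_nonneg := (vnorm_nonneg _).trans hs
  have hΔs_nonneg := (vnorm_nonneg _).trans hΔs
  have hD := (mnorm_nonneg C).trans hC
  have hδ := (mnorm_nonneg _).trans hΔC
  calc _ ≤ _ := mnorm_gradChiKappa_sub_le ρ J ζ κ κ' C C' d d'
    _ ≤ S * D * f + S * δ * B₂ + c₂ * (D * e + √(B₁ ^ 2 + 1) * δ) * D * B₂ := by
      gcongr <;> exact mnorm_nonneg _
    _ = _ := by ring

end Gradient

theorem statement4_general {n₁ n₂ n₃ l₁ : ℕ} (ψ : ℝ → ℝ) (c₁ c₂ : ℝ)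
    (hψ : Differentiable ℝ ψ)
    (hc₁ : ∀ x, |deriv ψ x| ≤ c₁) (hc₂ : ∀ x y, |deriv ψ x - deriv ψ y| ≤ c₂ * |x - y|)
    (𝒦 : Set (Fin l₁ → ℝ))
    (ρ : (Fin l₁ → ℝ) → (Fin n₁ → ℝ) → Fin n₂ → ℝ)
    (J : (Fin l₁ → ℝ) → Fin n₂ → Fin l₁ → ℝ) (ζ : Fin n₁ → ℝ)
    (hJ : ∀ κ ∈ 𝒦, HasFDerivAt (fun κ' => ρ κ' ζ)
      (Matrix.mulVecLin (Matrix.of (J κ))).toContinuousLinearMap κ)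
    (D L₁ L₂ B₁ B₂ : ℝ)
    (hρLip : ∀ κ ∈ 𝒦, ∀ κ' ∈ 𝒦, vnorm (ρ κ ζ - ρ κ' ζ) ≤ L₁ * vnorm (κ - κ'))
    (hJLip : ∀ κ ∈ 𝒦, ∀ κ' ∈ 𝒦, mnorm (J κ - J κ') ≤ L₂ * vnorm (κ - κ'))
    (hρB : ∀ κ ∈ 𝒦, vnorm (ρ κ ζ) ≤ B₁)
    (hJB : ∀ κ ∈ 𝒦, mnorm (J κ) ≤ B₂) :
    ∀ κ ∈ 𝒦, ∀ κ' ∈ 𝒦, ∀ (C C' : Fin n₃ → Fin n₂ → ℝ) (d d' : Fin n₃ → ℝ),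
      Real.sqrt ((mnorm C) ^ 2 + (vnorm d) ^ 2) ≤ D →
      Real.sqrt ((mnorm C') ^ 2 + (vnorm d') ^ 2) ≤ D →
      Real.sqrt
        ((mnorm (gradChiKappa ψ ρ J ζ κ C d - gradChiKappa ψ ρ J ζ κ' C' d')) ^ 2
          + (∑ k, ∑ i, ∑ j, (gradChiC ψ ρ ζ κ C d k i j - gradChiC ψ ρ ζ κ' C' d' k i j) ^ 2)
          + (∑ k, ∑ i, (gradChiD ψ ρ ζ κ C d k i - gradChiD ψ ρ ζ κ' C' d' k i) ^ 2))
        ≤ Real.sqrt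
            ((max (3 * L₁ ^ 2 * (c₁ ^ 2 * (n₃ : ℝ) + c₂ ^ 2 * D ^ 2 * B₁ ^ 2)
                    + 2 * c₂ ^ 2 * D ^ 2 * L₁ ^ 2)
                  (c₂ ^ 2 * (B₁ ^ 2 + 1) * (3 * B₁ ^ 2 + 2)))
              + (((n₃ : ℝ) * c₁ * D * L₂ + B₂ * c₂ * D ^ 2 * L₁) ^ 2
                  + B₂ ^ 2 * ((n₃ : ℝ) * c₁ + D * c₂ * Real.sqrt (B₁ ^ 2 + 1)) ^ 2)) *
          Real.sqrt ((vnorm (κ - κ')) ^ 2 + (mnorm (C - C')) ^ 2 + (vnorm (d - d')) ^ 2) := by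
  intro κ hκ κ' hκ' C C' d d' hD hD'
  have hc₁_nonneg : 0 ≤ c₁ := (abs_nonneg _).trans (hc₁ 0)
  set T := vnorm (κ - κ')
  set δ := √(mnorm (C - C') ^ 2 + vnorm (d - d') ^ 2) with hδ
  have hδ_sq : δ ^ 2 = mnorm (C - C') ^ 2 + vnorm (d - d') ^ 2 := Real.sq_sqrt (by positivity)
  have hC := (mnorm_le_sqrt_sq_add_sq C (vnorm d)).trans hD
  have hC' := (mnorm_le_sqrt_sq_add_sq C' (vnorm d')).trans hD'
  have hs := vnorm_activationSlope_le ρ ζ κ C d hc₁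
  have hs' : vnorm (activationSlope ψ ρ ζ κ C d) ≤ n₃ * c₁ :=
    hs.trans (mul_le_mul_of_nonneg_right (sqrt_natCast_le n₃) hc₁_nonneg)
  have hΔs := vnorm_activationSlope_sub_le_of_le hc₂ hC (hρLip κ hκ κ' hκ') (hρB κ' hκ') hδ.ge
  have hΛ := sum_gradChiC_add_sum_gradChiD_le hs hΔs (hρLip κ hκ κ' hκ') (hρB κ' hκ')
  have hK := mnorm_gradChiKappa_sub_le_of_le hs' hΔs hC hC'
    (mnorm_le_sqrt_sq_add_sq _ _) (hJLip κ hκ κ' hκ') (hJB κ' hκ')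
  rw [add_assoc, add_assoc (T ^ 2), ← hδ_sq, ← mul_pow B₂]
  refine sqrt_sq_add_le (mnorm_nonneg _) (hK.trans_eq (by ring)) (hΛ.trans_eq ?_)
  rw [mul_pow (√_), Real.sq_sqrt (Nat.cast_nonneg n₃)]
  ring

/-- the full gradient ∇χ = ((∂/∂κ)χ, (∂/∂λ)χ) is Lipschitz in μ = (κ, λ)
with constant √(m₁ + m₂). -/
theorem statement4 {n₁ n₂ n₃ l₁ : ℕ} (ψ : ℝ → ℝ) (c₁ c₂ : ℝ)
    (hψ : Differentiable ℝ ψ) (hψ' : Differentiable ℝ (deriv ψ))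
    (hc₁ : ∀ x, |deriv ψ x| ≤ c₁) (hc₂ : ∀ x, |deriv (deriv ψ) x| ≤ c₂)
    (𝒦 : Set (Fin l₁ → ℝ))
    (ρ : (Fin l₁ → ℝ) → (Fin n₁ → ℝ) → Fin n₂ → ℝ)
    (J : (Fin l₁ → ℝ) → Fin n₂ → Fin l₁ → ℝ) (ζ : Fin n₁ → ℝ)
    (hJ : ∀ κ ∈ 𝒦, HasFDerivAt (fun κ' => ρ κ' ζ)
      (Matrix.mulVecLin (Matrix.of (J κ))).toContinuousLinearMap κ)
    (D L₁ L₂ B₁ B₂ : ℝ)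
    (hρLip : ∀ κ ∈ 𝒦, ∀ κ' ∈ 𝒦, vnorm (ρ κ ζ - ρ κ' ζ) ≤ L₁ * vnorm (κ - κ'))
    (hJLip : ∀ κ ∈ 𝒦, ∀ κ' ∈ 𝒦, mnorm (J κ - J κ') ≤ L₂ * vnorm (κ - κ'))
    (hρB : ∀ κ ∈ 𝒦, vnorm (ρ κ ζ) ≤ B₁)
    (hJB : ∀ κ ∈ 𝒦, mnorm (J κ) ≤ B₂) :
    ∀ κ ∈ 𝒦, ∀ κ' ∈ 𝒦, ∀ (C C' : Fin n₃ → Fin n₂ → ℝ) (d d' : Fin n₃ → ℝ),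
      Real.sqrt ((mnorm C) ^ 2 + (vnorm d) ^ 2) < D →
      Real.sqrt ((mnorm C') ^ 2 + (vnorm d') ^ 2) < D →
      Real.sqrt
        ((mnorm (gradChiKappa ψ ρ J ζ κ C d - gradChiKappa ψ ρ J ζ κ' C' d')) ^ 2
          + (∑ k, ∑ i, ∑ j, (gradChiC ψ ρ ζ κ C d k i j - gradChiC ψ ρ ζ κ' C' d' k i j) ^ 2)
          + (∑ k, ∑ i, (gradChiD ψ ρ ζ κ C d k i - gradChiD ψ ρ ζ κ' C' d' k i) ^ 2))
        ≤ Real.sqrt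
            ((max (3 * L₁ ^ 2 * (c₁ ^ 2 * (n₃ : ℝ) + c₂ ^ 2 * D ^ 2 * B₁ ^ 2)
                    + 2 * c₂ ^ 2 * D ^ 2 * L₁ ^ 2)
                  (c₂ ^ 2 * (B₁ ^ 2 + 1) * (3 * B₁ ^ 2 + 2)))
              + (((n₃ : ℝ) * c₁ * D * L₂ + B₂ * c₂ * D ^ 2 * L₁) ^ 2
                  + B₂ ^ 2 * ((n₃ : ℝ) * c₁ + D * c₂ * Real.sqrt (B₁ ^ 2 + 1)) ^ 2)) *
          Real.sqrt ((vnorm (κ - κ')) ^ 2 + (mnorm (C - C')) ^ 2 + (vnorm (d - d')) ^ 2) := by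
  exact fun κ hκ κ' hκ' _ _ _ _ hD hD' => statement4_general ψ c₁ c₂ hψ hc₁
    (abs_sub_le_of_abs_deriv_le hψ' hc₂) 𝒦 ρ J ζ hJ D L₁ L₂ B₁ B₂ hρLip hJLip hρB hJB
    κ hκ κ' hκ' _ _ _ _ hD.le hD'.le
end

section
/- (Theorem on Lipschitz constants of hidden layers.) Assume the parameter space Ω is non-empty, open and bounded: ‖Θ‖ < B_Ω for all Θ ∈ Ω. Fix an input ζ_x with S = ‖ζ_x‖. Then for every 1 ≤ u ≤ m, the layer map N_u and its gradient ∇N_u (with respect to the flattened parameters Θ_u) are Lipschitz continuous with constants L_{N_u} and L_{∇N_u}, and N_u is uniformly bounded by B_{N_u} = √ℓ_u·σ_max and ∇N_u by B_{∇N_u} = L_{N_u}, where the constants satisfy the recursion: L_{N₁} = σ′_max√(S² + 1), L_{∇N₁} = σ″_max√((S² + 1)(3S² + 2)); and for 2 ≤ u ≤ m: L_{N_u} = σ′_max√(B_Ω²L_{N_{u−1}}² + B_{N_{u−1}}² + 1), L_{∇N_u} = √(α_u + β_u) with α_u = max{ 3L_{N_{u−1}}²((σ′_max)²ℓ_u +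 (σ″_max)²B_Ω²B_{N_{u−1}}²) + 2(σ″_max)²B_Ω²L_{N_{u−1}}² , (σ″_max)²(B_{N_{u−1}}² + 1)(3B_{N_{u−1}}² + 2) } and β_u = (ℓ_uσ′_maxB_ΩL_{∇N_{u−1}} + σ″_maxB_Ω²L_{N_{u−1}}²)² + L_{N_{u−1}}²(ℓ_uσ′_max + B_Ωσ″_max(B_{N_{u−1}}² + 1)^{1/2})². -/
open scoped BigOperators

/-- Index set for the flattened parameters Θ_u = (θ₁,…,θ_u) of the first `u` layers:
layer `v+1` has a weight matrix A^{(v+1)} ∈ ℝ^{ℓ(v+1)×ℓ(v)} and a bias b^{(v+1)} ∈ ℝ^{ℓ(v+1)}. -/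
abbrev ParamIndex (ℓ : ℕ → ℕ) (u : ℕ) :=
  (v : Fin u) × ((Fin (ℓ (v.1 + 1)) × Fin (ℓ v.1)) ⊕ Fin (ℓ (v.1 + 1)))

/-- Flattened parameter space of the first `u` layers, carrying the Frobenius-type
(Euclidean) norm. -/
abbrev ParamSpace (ℓ : ℕ → ℕ) (u : ℕ) := EuclideanSpace ℝ (ParamIndex ℓ u)

/-- Truncation Θ_{u+1} ↦ Θ_u, forgetting the parameters of the last layer. -/
noncomputable def trunc {ℓ : ℕ → ℕ} {u : ℕ} (Θ : ParamSpace ℓ (u + 1)) : ParamSpace ℓ u :=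
  (WithLp.equiv 2 _).symm fun p => Θ ⟨⟨p.1.1, Nat.lt_succ_of_lt p.1.2⟩, p.2⟩

/-- The layer maps: `net ℓ σ ζ u Θ` is N_u(Θ_u) = σ_u(A^{(u)} N_{u−1}(Θ_{u−1}) + b^{(u)}),
with N_0 = ζ the fixed input; the activation σ_u is applied componentwise. -/
noncomputable def net (ℓ : ℕ → ℕ) (σ : ℕ → ℝ → ℝ) (ζ : Fin (ℓ 0) → ℝ) :
    (u : ℕ) → ParamSpace ℓ u → EuclideanSpace ℝ (Fin (ℓ u))
  | 0, _ => (WithLp.equiv 2 _).symm ζ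
  | u + 1, Θ => (WithLp.equiv 2 _).symm fun i =>
      σ (u + 1) ((∑ j, Θ ⟨⟨u, Nat.lt_succ_self u⟩, Sum.inl (i, j)⟩ *
        net ℓ σ ζ u (trunc Θ) j) + Θ ⟨⟨u, Nat.lt_succ_self u⟩, Sum.inr i⟩)

/-- The uniform bound B_{N_u} = √ℓ_u·σ_max. -/
noncomputable def BN (ℓ : ℕ → ℕ) (σmax : ℝ) (u : ℕ) : ℝ := Real.sqrt (ℓ u : ℝ) * σmax

/-- The recursive Lipschitz constants L_{N_u}: L_{N_1} = σ′_max√(S²+1),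
L_{N_u} = σ′_max√(B_Ω²L_{N_{u−1}}² + B_{N_{u−1}}² + 1). -/
noncomputable def LN (ℓ : ℕ → ℕ) (σmax σ'max BΩ S : ℝ) : ℕ → ℝ
  | 0 => 0
  | 1 => σ'max * Real.sqrt (S ^ 2 + 1)
  | u + 2 => σ'max * Real.sqrt (BΩ ^ 2 * (LN ℓ σmax σ'max BΩ S (u + 1)) ^ 2
      + (BN ℓ σmax (u + 1)) ^ 2 + 1)

/-- The recursive Lipschitz constants L_{∇N_u} of the gradients:
L_{∇N_1} = σ″_max√((S²+1)(3S²+2)), L_{∇N_u} = √(α_u + β_u). -/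
noncomputable def LgN (ℓ : ℕ → ℕ) (σmax σ'max σ''max BΩ S : ℝ) : ℕ → ℝ
  | 0 => 0
  | 1 => σ''max * Real.sqrt ((S ^ 2 + 1) * (3 * S ^ 2 + 2))
  | u + 2 =>
      Real.sqrt
        ((max (3 * (LN ℓ σmax σ'max BΩ S (u + 1)) ^ 2 *
                (σ'max ^ 2 * ((ℓ (u + 2) : ℝ)) + σ''max ^ 2 * BΩ ^ 2 * (BN ℓ σmax (u + 1)) ^ 2)
              + 2 * σ''max ^ 2 * BΩ ^ 2 * (LN ℓ σmax σ'max BΩ S (u + 1)) ^ 2)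
          (σ''max ^ 2 * ((BN ℓ σmax (u + 1)) ^ 2 + 1) * (3 * (BN ℓ σmax (u + 1)) ^ 2 + 2)))
        + (((ℓ (u + 2) : ℝ) * σ'max * BΩ * LgN ℓ σmax σ'max σ''max BΩ S (u + 1)
              + σ''max * BΩ ^ 2 * (LN ℓ σmax σ'max BΩ S (u + 1)) ^ 2) ^ 2
            + (LN ℓ σmax σ'max BΩ S (u + 1)) ^ 2 *
              ((ℓ (u + 2) : ℝ) * σ'max
                + BΩ * σ''max * Real.sqrt ((BN ℓ σmax (u + 1)) ^ 2 + 1)) ^ 2))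

/-!
A layer is `φ ∘ z` with `z x = A x (N (T x)) + β x`, where `N` is the previous layer, `φ` the
componentwise activation, and the weights `A x`, bias `β x` and earlier parameters `T x` split
`‖x‖ ^ 2` into three parts. By the product rule both `‖z x - z y‖` and the directional derivative of
`z` are bounded linearly in the three component norms of `x - y` and of the direction. By the chain
rule the gradient of the layer is then controlled by a linear form, and its increments by a bilinear
form, in these component norms; Cauchy-Schwarz turns the coefficients of the two forms into the
constants of the recursion, and induction on the depth concludes. The first layer is the case
`L = K = 0`, since the input does not depend on the parameters.
-/

/-- Quantitative `C^{1,1}` control of `f`: `f` is differentiable and bounded by `b` everywhere, and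
on `U` its derivative is bounded by `L` and `K`-Lipschitz. This is the induction hypothesis
propagated through the layers; the bound `b` is not restricted to `U` because it only depends on
the activation. -/
structure HasC11Bounds {E F : Type*} [NormedAddCommGroup E] [NormedSpace ℝ E]
    [NormedAddCommGroup F] [NormedSpace ℝ F] (f : E → F) (U : Set E) (b L K : ℝ) : Prop where
  differentiable : Differentiable ℝ f
  norm_le : ∀ x, ‖f x‖ ≤ b
  norm_fderiv_le : ∀ x ∈ U, ‖fderiv ℝ f x‖ ≤ L
  lipschitz_nonneg : 0 ≤ K
  norm_fderiv_sub_le : ∀ x ∈ U, ∀ y ∈ U, ‖fderiv ℝ f x - fderiv ℝ f y‖ ≤ K * ‖x - y‖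

namespace HasC11Bounds

variable {E F : Type*} [NormedAddCommGroup E] [NormedSpace ℝ E]
  [NormedAddCommGroup F] [NormedSpace ℝ F] {f : E → F} {U : Set E} {b b' L L' K K' : ℝ}

lemma norm_sub_le (hf : HasC11Bounds f U b L K) (hU : Convex ℝ U) {x y : E} (hx : x ∈ U)
    (hy : y ∈ U) : ‖f x - f y‖ ≤ L * ‖x - y‖ :=
  hU.norm_image_sub_le_of_norm_fderiv_le (fun z _ ↦ hf.differentiable z) hf.norm_fderiv_le hy hx

lemma const {c : F} (hc : ‖c‖ ≤ b) : HasC11Bounds (fun _ : E ↦ c) U b 0 0 where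
  differentiable := differentiable_const c
  norm_le _ := hc
  norm_fderiv_le := by simp
  lipschitz_nonneg := le_rfl
  norm_fderiv_sub_le := by simp

lemma mono_lipschitz (hf : HasC11Bounds f U b L K) (hK : K ≤ K') : HasC11Bounds f U b L K' where
  __ := hf
  lipschitz_nonneg := hf.lipschitz_nonneg.trans hK
  norm_fderiv_sub_le x hx y hy := (hf.norm_fderiv_sub_le x hx y hy).trans <| by gcongr

end HasC11Bounds

section Activation

open Matrix WithLp

variable {ι : Type*} [Fintype ι]

/-- The scalar activation `s` applied to every coordinate of a Euclidean vector. -/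
noncomputable def coordwise (s : ℝ → ℝ) (z : EuclideanSpace ℝ ι) : EuclideanSpace ℝ ι :=
  toLp 2 fun i ↦ s (z i)

lemma norm_coordwise_le {s : ℝ → ℝ} {C : ℝ} (hs : ∀ x, |s x| ≤ C) (z : EuclideanSpace ℝ ι) :
    ‖coordwise s z‖ ≤ √(Fintype.card ι) * C := by
  have hC : 0 ≤ C := (abs_nonneg _).trans (hs 0)
  calc ‖coordwise s z‖ = √(∑ i, s (z i) ^ 2) := by simp [EuclideanSpace.norm_eq, coordwise]
    _ ≤ √(∑ _ : ι, C ^ 2) := by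
        gcongr √(∑ _, ?_) with i
        exact sq_le_sq' (abs_le.1 (hs (z i))).1 (abs_le.1 (hs (z i))).2
    _ = √(Fintype.card ι) * C := by simp [Real.sqrt_sq hC]

lemma norm_toEuclideanCLM_diagonal_le [DecidableEq ι] {d : ι → ℝ} {C : ℝ} (hC : 0 ≤ C)
    (hd : ∀ i, |d i| ≤ C) : ‖toEuclideanCLM (n := ι) (𝕜 := ℝ) (diagonal d)‖ ≤ C := by
  open scoped Matrix.Norms.L2Operator in
  rw [l2_opNorm_toEuclideanCLM, l2_opNorm_diagonal]
  exact (pi_norm_le_iff_of_nonneg hC).2 hd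

lemma hasFDerivAt_coordwise [DecidableEq ι] {s : ℝ → ℝ} (hs : Differentiable ℝ s)
    (z : EuclideanSpace ℝ ι) :
    HasFDerivAt (coordwise s)
      (toEuclideanCLM (n := ι) (𝕜 := ℝ) (diagonal fun i ↦ deriv s (z i))) z := by
  rw [← hasFDerivWithinAt_univ, hasFDerivWithinAt_euclidean]
  intro i
  have hcoord : HasFDerivAt (fun z : EuclideanSpace ℝ ι ↦ s (z i))
      (deriv s (z i) • EuclideanSpace.proj i) z :=
    (hs (z i)).hasDerivAt.comp_hasFDerivAt z
      (EuclideanSpace.proj i : EuclideanSpace ℝ ι →L[ℝ] ℝ).hasFDerivAt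
  refine (hcoord.congr_fderiv ?_).hasFDerivWithinAt
  ext w
  simp [mulVec_diagonal]

lemma hasC11Bounds_coordwise {s : ℝ → ℝ} {s₀ s₁ s₂ : ℝ} (hs : Differentiable ℝ s)
    (hs₀ : ∀ x, |s x| ≤ s₀) (hs₁ : ∀ x, |deriv s x| ≤ s₁)
    (hs₂ : ∀ x y, |deriv s x - deriv s y| ≤ s₂ * |x - y|) :
    HasC11Bounds (coordwise s : EuclideanSpace ℝ ι → EuclideanSpace ℝ ι) Set.univ
      (√(Fintype.card ι) * s₀) s₁ s₂ := by
  classical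
  have hs₂_nonneg : 0 ≤ s₂ := by simpa using (abs_nonneg _).trans (hs₂ 1 0)
  refine ⟨fun z ↦ (hasFDerivAt_coordwise hs z).differentiableAt, norm_coordwise_le hs₀,
    fun z _ ↦ ?_, hs₂_nonneg, fun z _ w _ ↦ ?_⟩
  · rw [(hasFDerivAt_coordwise hs z).fderiv]
    exact norm_toEuclideanCLM_diagonal_le ((abs_nonneg _).trans (hs₁ 0)) fun i ↦ hs₁ (z i)
  · rw [(hasFDerivAt_coordwise hs z).fderiv, (hasFDerivAt_coordwise hs w).fderiv, ← map_sub,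
      diagonal_sub]
    refine norm_toEuclideanCLM_diagonal_le (by positivity) fun i ↦ (hs₂ (z i) (w i)).trans ?_
    gcongr
    exact PiLp.norm_apply_le (z - w) i

end Activation

section Constants

variable (k s₁ s₂ B b L K : ℝ)

/-- The constant `L_{N_u}` in terms of the bound `b` and the Lipschitz constant `L` of the previous
layer, for parameters of norm less than `B`. -/
noncomputable def layerLip : ℝ := s₁ * √(B ^ 2 * L ^ 2 + b ^ 2 + 1)

/-- The constant `α_u` in terms of the constants of the previous layer, where `k` stands for the
width `ℓ_u`. -/
noncomputable def layerAlpha : ℝ :=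
  max (3 * L ^ 2 * (s₁ ^ 2 * k + s₂ ^ 2 * B ^ 2 * b ^ 2) + 2 * s₂ ^ 2 * B ^ 2 * L ^ 2)
    (s₂ ^ 2 * (b ^ 2 + 1) * (3 * b ^ 2 + 2))

/-- The constant `β_u` in terms of the constants of the previous layer, where `k` stands for the
width `ℓ_u`. -/
noncomputable def layerBeta : ℝ :=
  (k * s₁ * B * K + s₂ * B ^ 2 * L ^ 2) ^ 2 + L ^ 2 * (k * s₁ + B * s₂ * √(b ^ 2 + 1)) ^ 2

/-- The constant `L_{∇N_u}` in terms of the constants of the previous layer, where `k` stands for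
the width `ℓ_u`. The gradient estimates already hold with `k = 1`. -/
noncomputable def layerGradLip : ℝ := √(layerAlpha k s₁ s₂ B b L + layerBeta k s₁ s₂ B b L K)

variable {k s₁ s₂ B b L K}

lemma mul_add_mul_add_mul_le_sqrt_mul_sqrt (x y z x' y' z' : ℝ) :
    x * x' + y * y' + z * z' ≤ √(x ^ 2 + y ^ 2 + z ^ 2) * √(x' ^ 2 + y' ^ 2 + z' ^ 2) := by
  simpa [Fin.sum_univ_three] using
    Real.sum_mul_le_sqrt_mul_sqrt Finset.univ ![x, y, z] ![x', y', z']

lemma layerGradLip_mono {k' : ℝ} (hk : 0 ≤ k) (hkk' : k ≤ k') (hs₁ : 0 ≤ s₁) (hs₂ : 0 ≤ s₂)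
    (hB : 0 ≤ B) (hK : 0 ≤ K) :
    layerGradLip k s₁ s₂ B b L K ≤ layerGradLip k' s₁ s₂ B b L K := by
  unfold layerGradLip layerAlpha layerBeta
  gcongr

lemma layerGradLip_zero (hs₂ : 0 ≤ s₂) :
    layerGradLip k s₁ s₂ B b 0 0 = s₂ * √((b ^ 2 + 1) * (3 * b ^ 2 + 2)) := by
  have halpha : layerAlpha k s₁ s₂ B b 0 = s₂ ^ 2 * ((b ^ 2 + 1) * (3 * b ^ 2 + 2)) := by
    simp only [layerAlpha]
    rw [max_eq_right (by ring_nf; positivity), mul_assoc]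
  have hbeta : layerBeta k s₁ s₂ B b 0 0 = 0 := by simp [layerBeta]
  rw [layerGradLip, halpha, hbeta, add_zero, Real.sqrt_mul (sq_nonneg _), Real.sqrt_sq hs₂]

lemma sq_add_sq_le_layerAlpha_mul (p q : ℝ) :
    (b * (s₂ * (√(b ^ 2 + 1) * p + B * L * q)) + s₁ * L * q) ^ 2
        + (s₂ * (√(b ^ 2 + 1) * p + B * L * q)) ^ 2
      ≤ layerAlpha 1 s₁ s₂ B b L * (p ^ 2 + q ^ 2) := by
  set c := √(b ^ 2 + 1)
  have hc : c ^ 2 = b ^ 2 + 1 := Real.sq_sqrt (by positivity)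
  have three_terms (x y z : ℝ) : (x + y + z) ^ 2 ≤ 3 * (x ^ 2 + y ^ 2 + z ^ 2) := by
    nlinarith [sq_nonneg (x - y), sq_nonneg (x - z), sq_nonneg (y - z)]
  calc _ = (b * s₂ * c * p + b * s₂ * B * L * q + s₁ * L * q) ^ 2
          + (s₂ * c * p + s₂ * B * L * q) ^ 2 := by ring
    _ ≤ 3 * ((b * s₂ * c * p) ^ 2 + (b * s₂ * B * L * q) ^ 2 + (s₁ * L * q) ^ 2)
          + 2 * ((s₂ * c * p) ^ 2 + (s₂ * B * L * q) ^ 2) :=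
        add_le_add (three_terms _ _ _) add_sq_le
    _ = s₂ ^ 2 * (b ^ 2 + 1) * (3 * b ^ 2 + 2) * p ^ 2
          + (3 * L ^ 2 * (s₁ ^ 2 * 1 + s₂ ^ 2 * B ^ 2 * b ^ 2) + 2 * s₂ ^ 2 * B ^ 2 * L ^ 2)
            * q ^ 2 := by
        simp only [mul_pow, hc]
        ring
    _ ≤ layerAlpha 1 s₁ s₂ B b L * p ^ 2 + layerAlpha 1 s₁ s₂ B b L * q ^ 2 := by
        gcongr
        · exact le_max_right _ _
        · exact le_max_left _ _
    _ = layerAlpha 1 s₁ s₂ B b L * (p ^ 2 + q ^ 2) := (mul_add _ _ _).symm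

lemma sq_le_layerBeta_mul (p q : ℝ) :
    (L * (s₁ + B * s₂ * √(b ^ 2 + 1)) * p + (s₁ * B * K + s₂ * B ^ 2 * L ^ 2) * q) ^ 2
      ≤ layerBeta 1 s₁ s₂ B b L K * (p ^ 2 + q ^ 2) := by
  have cauchy_schwarz (x y : ℝ) : (x * p + y * q) ^ 2 ≤ (y ^ 2 + x ^ 2) * (p ^ 2 + q ^ 2) := by
    nlinarith [sq_nonneg (x * q - y * p)]
  rw [layerBeta, one_mul, ← mul_pow L]
  exact cauchy_schwarz _ _

-- As a linear form in `(a, d, t)` the left-hand side has coefficients at most `(X, Y, Z)`; the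
-- weight and bias coefficients `X`, `Y` account for `α_u`, and `Z` for `β_u`.
lemma layer_bilinear_le_layerGradLip_mul {a d t a' d' t' : ℝ} (hs₁ : 0 ≤ s₁) (hs₂ : 0 ≤ s₂)
    (hB : 0 ≤ B) (hb : 0 ≤ b) (hL : 0 ≤ L) (ha : 0 ≤ a) (hd : 0 ≤ d) (ht : 0 ≤ t) :
    s₂ * (b * a' + d' + B * L * t') * (b * a + d + B * L * t)
        + s₁ * (L * (a * t' + a' * t) + B * K * t' * t)
      ≤ layerGradLip 1 s₁ s₂ B b L K * √(a' ^ 2 + d' ^ 2 + t' ^ 2)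
        * √(a ^ 2 + d ^ 2 + t ^ 2) := by
  set c := √(b ^ 2 + 1)
  set p := √(a' ^ 2 + d' ^ 2)
  have hp_sq : p ^ 2 = a' ^ 2 + d' ^ 2 := Real.sq_sqrt (by positivity)
  have ha'_le : a' ≤ p := Real.le_sqrt_of_sq_le (by linarith [sq_nonneg d'])
  have hcp : b * a' + d' ≤ c * p := by
    simpa using mul_add_mul_add_mul_le_sqrt_mul_sqrt b 1 0 a' d' 0
  set X := b * (s₂ * (c * p + B * L * t')) + s₁ * L * t' with hX
  set Y := s₂ * (c * p + B * L * t') with hY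
  set Z := L * (s₁ + B * s₂ * c) * p + (s₁ * B * K + s₂ * B ^ 2 * L ^ 2) * t' with hZ
  have hXYZ : X ^ 2 + Y ^ 2 + Z ^ 2
      ≤ (layerAlpha 1 s₁ s₂ B b L + layerBeta 1 s₁ s₂ B b L K) * (a' ^ 2 + d' ^ 2 + t' ^ 2) := by
    rw [add_mul, ← hp_sq]
    exact add_le_add (sq_add_sq_le_layerAlpha_mul p t') (sq_le_layerBeta_mul p t')
  calc _ ≤ s₂ * (c * p + B * L * t') * (b * a + d + B * L * t)
          + s₁ * (L * (a * t' + p * t) + B * K * t' * t) := by gcongr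
    _ = X * a + Y * d + Z * t := by rw [hX, hY, hZ]; ring
    _ ≤ √(X ^ 2 + Y ^ 2 + Z ^ 2) * √(a ^ 2 + d ^ 2 + t ^ 2) :=
        mul_add_mul_add_mul_le_sqrt_mul_sqrt X Y Z a d t
    _ ≤ _ := by
        gcongr
        rw [layerGradLip, ← Real.sqrt_mul' _ (by positivity)]
        exact Real.sqrt_le_sqrt hXYZ

end Constants

section Layer

open Metric

variable {E E' F G H : Type*} [NormedAddCommGroup E] [NormedSpace ℝ E]
  [NormedAddCommGroup E'] [NormedSpace ℝ E'] [NormedAddCommGroup F] [NormedSpace ℝ F]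
  [NormedAddCommGroup G] [NormedSpace ℝ G] [NormedAddCommGroup H] [NormedSpace ℝ H]

/-- The pre-activation `A^{(u)} N_{u-1}(Θ_{u-1}) + b^{(u)}` of a layer as a function of all the
parameters `x`: the weights `A x`, the bias `β x` and the parameters `T x` of the previous layers
are read off linearly from `x`. -/
noncomputable def preactivation (A : E' →L[ℝ] F →L[ℝ] G) (β : E' →L[ℝ] G) (T : E' →L[ℝ] E)
    (N : E → F) (x : E') : G :=
  A x (N (T x)) + β x

variable {A : E' →L[ℝ] F →L[ℝ] G} {β : E' →L[ℝ] G} {T : E' →L[ℝ] E} {N : E → F} {φ : G → H}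
  {B b L K M s₁ s₂ : ℝ}

lemma hasFDerivAt_preactivation (hN : Differentiable ℝ N) (x : E') :
    HasFDerivAt (preactivation A β T N)
      ((A x).comp ((fderiv ℝ N (T x)).comp T) + A.flip (N (T x)) + β) x :=
  (A.hasFDerivAt.clm_apply ((hN (T x)).hasFDerivAt.comp x T.hasFDerivAt)).add β.hasFDerivAt

lemma fderiv_preactivation_apply (hN : Differentiable ℝ N) (x v : E') :
    fderiv ℝ (preactivation A β T N) x v
      = A v (N (T x)) + β v + A x (fderiv ℝ N (T x) (T v)) := by
  simp only [(hasFDerivAt_preactivation hN x).fderiv, add_apply, ContinuousLinearMap.comp_apply,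
    ContinuousLinearMap.flip_apply]
  abel

lemma norm_fderiv_preactivation_apply_le (hN : HasC11Bounds N (ball 0 B) b L K) {x : E'}
    (hA : ‖A x‖ ≤ B) (hT : T x ∈ ball 0 B) (v : E') :
    ‖fderiv ℝ (preactivation A β T N) x v‖ ≤ b * ‖A v‖ + ‖β v‖ + B * L * ‖T v‖ := by
  have hweight : ‖A v (N (T x))‖ ≤ ‖A v‖ * b := (A v).le_opNorm_of_le (hN.norm_le _)
  have hprev : ‖A x (fderiv ℝ N (T x) (T v))‖ ≤ B * (L * ‖T v‖) :=
    (A x).le_of_opNorm_le_of_le hA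
      ((fderiv ℝ N (T x)).le_of_opNorm_le (hN.norm_fderiv_le _ hT) _)
  rw [fderiv_preactivation_apply hN.differentiable]
  linarith [norm_add₃_le (a := A v (N (T x))) (b := β v) (c := A x (fderiv ℝ N (T x) (T v)))]

lemma norm_preactivation_sub_le (hN : HasC11Bounds N (ball 0 B) b L K) {x y : E'}
    (hA : ‖A y‖ ≤ B) (hTx : T x ∈ ball 0 B) (hTy : T y ∈ ball 0 B) :
    ‖preactivation A β T N x - preactivation A β T N y‖
      ≤ b * ‖A (x - y)‖ + ‖β (x - y)‖ + B * L * ‖T (x - y)‖ := by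
  have hsplit : preactivation A β T N x - preactivation A β T N y
      = A (x - y) (N (T x)) + β (x - y) + A y (N (T x) - N (T y)) := by
    simp only [preactivation, map_sub, sub_apply]
    abel
  have hweight : ‖A (x - y) (N (T x))‖ ≤ ‖A (x - y)‖ * b :=
    (A (x - y)).le_opNorm_of_le (hN.norm_le _)
  have hprev : ‖A y (N (T x) - N (T y))‖ ≤ B * (L * ‖T (x - y)‖) := by
    rw [map_sub T]
    exact (A y).le_of_opNorm_le_of_le hA (hN.norm_sub_le (convex_ball 0 B) hTx hTy)
  rw [hsplit]
  linarith [norm_add₃_le (a := A (x - y) (N (T x))) (b := β (x - y))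
    (c := A y (N (T x) - N (T y)))]

lemma norm_fderiv_preactivation_sub_apply_le (hN : HasC11Bounds N (ball 0 B) b L K) {x y : E'}
    (hA : ‖A y‖ ≤ B) (hTx : T x ∈ ball 0 B) (hTy : T y ∈ ball 0 B) (v : E') :
    ‖(fderiv ℝ (preactivation A β T N) x - fderiv ℝ (preactivation A β T N) y) v‖
      ≤ L * (‖A v‖ * ‖T (x - y)‖ + ‖A (x - y)‖ * ‖T v‖) + B * K * ‖T (x - y)‖ * ‖T v‖ := by
  set N' := fderiv ℝ N
  have hsplit : (fderiv ℝ (preactivation A β T N) x - fderiv ℝ (preactivation A β T N) y) v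
      = A v (N (T x) - N (T y)) + A (x - y) (N' (T x) (T v))
        + A y ((N' (T x) - N' (T y)) (T v)) := by
    simp only [sub_apply, fderiv_preactivation_apply hN.differentiable, map_sub, N']
    abel
  have hlayer : ‖A v (N (T x) - N (T y))‖ ≤ ‖A v‖ * (L * ‖T (x - y)‖) := by
    rw [map_sub T]
    exact (A v).le_opNorm_of_le (hN.norm_sub_le (convex_ball 0 B) hTx hTy)
  have hweight : ‖A (x - y) (N' (T x) (T v))‖ ≤ ‖A (x - y)‖ * (L * ‖T v‖) :=
    (A (x - y)).le_opNorm_of_le ((N' (T x)).le_of_opNorm_le (hN.norm_fderiv_le _ hTx) _)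
  have hgrad : ‖A y ((N' (T x) - N' (T y)) (T v))‖ ≤ B * (K * ‖T (x - y)‖ * ‖T v‖) := by
    rw [map_sub T]
    exact (A y).le_of_opNorm_le_of_le hA
      ((N' (T x) - N' (T y)).le_of_opNorm_le (hN.norm_fderiv_sub_le _ hTx _ hTy) _)
  rw [hsplit]
  linarith [norm_add₃_le (a := A v (N (T x) - N (T y))) (b := A (x - y) (N' (T x) (T v)))
    (c := A y ((N' (T x) - N' (T y)) (T v)))]

lemma fderiv_comp_preactivation (hφ : Differentiable ℝ φ) (hN : Differentiable ℝ N) (x : E') :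
    fderiv ℝ (φ ∘ preactivation A β T N) x
      = (fderiv ℝ φ (preactivation A β T N x)).comp (fderiv ℝ (preactivation A β T N) x) :=
  fderiv_comp x (hφ _) (hasFDerivAt_preactivation hN x).differentiableAt

lemma norm_weight_le (hnorm : ∀ x, ‖A x‖ ^ 2 + ‖β x‖ ^ 2 + ‖T x‖ ^ 2 ≤ ‖x‖ ^ 2) (x : E') :
    ‖A x‖ ≤ ‖x‖ :=
  (sq_le_sq₀ (norm_nonneg _) (norm_nonneg _)).1 <| by
    linarith [hnorm x, sq_nonneg ‖β x‖, sq_nonneg ‖T x‖]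

lemma norm_previous_le (hnorm : ∀ x, ‖A x‖ ^ 2 + ‖β x‖ ^ 2 + ‖T x‖ ^ 2 ≤ ‖x‖ ^ 2) (x : E') :
    ‖T x‖ ≤ ‖x‖ :=
  (sq_le_sq₀ (norm_nonneg _) (norm_nonneg _)).1 <| by
    linarith [hnorm x, sq_nonneg ‖β x‖, sq_nonneg ‖A x‖]

lemma norm_fderiv_comp_preactivation_le (hφ : HasC11Bounds φ Set.univ M s₁ s₂)
    (hN : HasC11Bounds N (ball 0 B) b L K)
    (hnorm : ∀ x, ‖A x‖ ^ 2 + ‖β x‖ ^ 2 + ‖T x‖ ^ 2 ≤ ‖x‖ ^ 2) {x : E'} (hx : ‖x‖ < B) :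
    ‖fderiv ℝ (φ ∘ preactivation A β T N) x‖ ≤ layerLip s₁ B b L := by
  have hs₁ : 0 ≤ s₁ := (norm_nonneg _).trans (hφ.norm_fderiv_le 0 (Set.mem_univ 0))
  have hAx : ‖A x‖ ≤ B := (norm_weight_le hnorm x).trans hx.le
  have hTx : T x ∈ ball 0 B := mem_ball_zero_iff.2 <| (norm_previous_le hnorm x).trans_lt hx
  rw [fderiv_comp_preactivation hφ.differentiable hN.differentiable]
  refine ContinuousLinearMap.opNorm_le_bound _ (by unfold layerLip; positivity) fun v ↦ ?_
  calc ‖fderiv ℝ φ (preactivation A β T N x) (fderiv ℝ (preactivation A β T N) x v)‖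
      ≤ s₁ * (b * ‖A v‖ + ‖β v‖ + B * L * ‖T v‖) :=
        (fderiv ℝ φ _).le_of_opNorm_le_of_le (hφ.norm_fderiv_le _ (Set.mem_univ _))
          (norm_fderiv_preactivation_apply_le hN hAx hTx v)
    _ ≤ s₁ * (√(b ^ 2 + 1 ^ 2 + (B * L) ^ 2) * √(‖A v‖ ^ 2 + ‖β v‖ ^ 2 + ‖T v‖ ^ 2)) := by
        gcongr
        simpa only [one_mul] using
          mul_add_mul_add_mul_le_sqrt_mul_sqrt b 1 (B * L) ‖A v‖ ‖β v‖ ‖T v‖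
    _ ≤ s₁ * (√(b ^ 2 + 1 ^ 2 + (B * L) ^ 2) * ‖v‖) := by
        gcongr
        exact (Real.sqrt_le_left (norm_nonneg v)).2 (hnorm v)
    _ = layerLip s₁ B b L * ‖v‖ := by
        rw [layerLip, mul_assoc]
        ring_nf

lemma norm_fderiv_comp_preactivation_sub_apply_le (hφ : HasC11Bounds φ Set.univ M s₁ s₂)
    (hN : Differentiable ℝ N) (x y v : E') :
    ‖(fderiv ℝ (φ ∘ preactivation A β T N) x - fderiv ℝ (φ ∘ preactivation A β T N) y) v‖
      ≤ s₂ * ‖preactivation A β T N x - preactivation A β T N y‖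
            * ‖fderiv ℝ (preactivation A β T N) x v‖
        + s₁ * ‖(fderiv ℝ (preactivation A β T N) x - fderiv ℝ (preactivation A β T N) y) v‖ := by
  set z := preactivation A β T N
  have hsplit : (fderiv ℝ (φ ∘ z) x - fderiv ℝ (φ ∘ z) y) v
      = (fderiv ℝ φ (z x) - fderiv ℝ φ (z y)) (fderiv ℝ z x v)
        + fderiv ℝ φ (z y) ((fderiv ℝ z x - fderiv ℝ z y) v) := by
    simp [z, fderiv_comp_preactivation hφ.differentiable hN]
  rw [hsplit]
  exact norm_add_le_of_le
    (ContinuousLinearMap.le_of_opNorm_le _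
      (hφ.norm_fderiv_sub_le _ (Set.mem_univ _) _ (Set.mem_univ _)) _)
    (ContinuousLinearMap.le_of_opNorm_le _ (hφ.norm_fderiv_le _ (Set.mem_univ _)) _)

lemma norm_fderiv_comp_preactivation_sub_le (hφ : HasC11Bounds φ Set.univ M s₁ s₂)
    (hN : HasC11Bounds N (ball 0 B) b L K)
    (hnorm : ∀ x, ‖A x‖ ^ 2 + ‖β x‖ ^ 2 + ‖T x‖ ^ 2 ≤ ‖x‖ ^ 2) {x y : E'} (hx : ‖x‖ < B)
    (hy : ‖y‖ < B) :
    ‖fderiv ℝ (φ ∘ preactivation A β T N) x - fderiv ℝ (φ ∘ preactivation A β T N) y‖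
      ≤ layerGradLip 1 s₁ s₂ B b L K * ‖x - y‖ := by
  have hT {w : E'} (hw : ‖w‖ < B) : T w ∈ ball 0 B :=
    mem_ball_zero_iff.2 <| (norm_previous_le hnorm w).trans_lt hw
  have hA {w : E'} (hw : ‖w‖ < B) : ‖A w‖ ≤ B := (norm_weight_le hnorm w).trans hw.le
  have hs₁ : 0 ≤ s₁ := (norm_nonneg _).trans (hφ.norm_fderiv_le 0 (Set.mem_univ 0))
  have hs₂ : 0 ≤ s₂ := hφ.lipschitz_nonneg
  have hB : 0 ≤ B := (norm_nonneg x).trans hx.le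
  have hb : 0 ≤ b := (norm_nonneg _).trans (hN.norm_le 0)
  have hL : 0 ≤ L := (norm_nonneg _).trans (hN.norm_fderiv_le _ (hT hx))
  refine ContinuousLinearMap.opNorm_le_bound _ (by unfold layerGradLip; positivity) fun v ↦ ?_
  calc _ ≤ s₂ * (b * ‖A (x - y)‖ + ‖β (x - y)‖ + B * L * ‖T (x - y)‖)
            * (b * ‖A v‖ + ‖β v‖ + B * L * ‖T v‖)
          + s₁ * (L * (‖A v‖ * ‖T (x - y)‖ + ‖A (x - y)‖ * ‖T v‖)
            + B * K * ‖T (x - y)‖ * ‖T v‖) := by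
        refine (norm_fderiv_comp_preactivation_sub_apply_le hφ hN.differentiable x y v).trans ?_
        gcongr
        · exact norm_preactivation_sub_le hN (hA hy) (hT hx) (hT hy)
        · exact norm_fderiv_preactivation_apply_le hN (hA hx) (hT hx) v
        · exact norm_fderiv_preactivation_sub_apply_le hN (hA hy) (hT hx) (hT hy) v
    _ ≤ layerGradLip 1 s₁ s₂ B b L K * √(‖A (x - y)‖ ^ 2 + ‖β (x - y)‖ ^ 2 + ‖T (x - y)‖ ^ 2)
          * √(‖A v‖ ^ 2 + ‖β v‖ ^ 2 + ‖T v‖ ^ 2) :=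
        layer_bilinear_le_layerGradLip_mul hs₁ hs₂ hB hb hL (norm_nonneg _) (norm_nonneg _)
          (norm_nonneg _)
    _ ≤ layerGradLip 1 s₁ s₂ B b L K * ‖x - y‖ * ‖v‖ := by
        have hsqrt (w : E') : √(‖A w‖ ^ 2 + ‖β w‖ ^ 2 + ‖T w‖ ^ 2) ≤ ‖w‖ :=
          (Real.sqrt_le_left (norm_nonneg w)).2 (hnorm w)
        have hconst : 0 ≤ layerGradLip 1 s₁ s₂ B b L K := Real.sqrt_nonneg _
        gcongr <;> exact hsqrt _

lemma HasC11Bounds.comp_preactivation (hφ : HasC11Bounds φ Set.univ M s₁ s₂)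
    (hN : HasC11Bounds N (ball 0 B) b L K)
    (hnorm : ∀ x, ‖A x‖ ^ 2 + ‖β x‖ ^ 2 + ‖T x‖ ^ 2 ≤ ‖x‖ ^ 2) :
    HasC11Bounds (φ ∘ preactivation A β T N) (ball 0 B) M (layerLip s₁ B b L)
      (layerGradLip 1 s₁ s₂ B b L K) where
  differentiable := hφ.differentiable.comp fun x ↦
    (hasFDerivAt_preactivation hN.differentiable x).differentiableAt
  norm_le _ := hφ.norm_le _
  norm_fderiv_le _ hx := norm_fderiv_comp_preactivation_le hφ hN hnorm (mem_ball_zero_iff.1 hx)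
  lipschitz_nonneg := Real.sqrt_nonneg _
  norm_fderiv_sub_le _ hx _ hy := norm_fderiv_comp_preactivation_sub_le hφ hN hnorm
    (mem_ball_zero_iff.1 hx) (mem_ball_zero_iff.1 hy)

end Layer

section Network

open Matrix Metric WithLp

variable {ℓ : ℕ → ℕ} {u : ℕ}

/-- The weights `A^{(u+1)}` of the last layer, as a linear map from the parameters to operators
between Euclidean spaces. -/
noncomputable def weightL (ℓ : ℕ → ℕ) (u : ℕ) : ParamSpace ℓ (u + 1) →L[ℝ]
    EuclideanSpace ℝ (Fin (ℓ u)) →L[ℝ] EuclideanSpace ℝ (Fin (ℓ (u + 1))) :=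
  LinearMap.toContinuousLinearMap <|
    (toEuclideanLin ≪≫ₗ LinearMap.toContinuousLinearMap).toLinearMap ∘ₗ
      { toFun Θ := of fun i j ↦ Θ ⟨Fin.last u, Sum.inl (i, j)⟩
        map_add' _ _ := rfl
        map_smul' _ _ := rfl }

/-- The bias `b^{(u+1)}` of the last layer, as a linear map of the parameters. -/
noncomputable def biasL (ℓ : ℕ → ℕ) (u : ℕ) :
    ParamSpace ℓ (u + 1) →L[ℝ] EuclideanSpace ℝ (Fin (ℓ (u + 1))) :=
  LinearMap.toContinuousLinearMap
    { toFun Θ := toLp 2 fun i ↦ Θ ⟨Fin.last u, Sum.inr i⟩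
      map_add' _ _ := rfl
      map_smul' _ _ := rfl }

/-- The truncation `trunc` as a linear map. -/
noncomputable def truncL (ℓ : ℕ → ℕ) (u : ℕ) : ParamSpace ℓ (u + 1) →L[ℝ] ParamSpace ℓ u :=
  LinearMap.toContinuousLinearMap
    { toFun := trunc
      map_add' _ _ := rfl
      map_smul' _ _ := rfl }

lemma net_succ_eq_comp_preactivation (σ : ℕ → ℝ → ℝ) (ζ : Fin (ℓ 0) → ℝ) :
    net ℓ σ ζ (u + 1) = coordwise (σ (u + 1)) ∘
      preactivation (weightL ℓ u) (biasL ℓ u) (truncL ℓ u) (net ℓ σ ζ u) :=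
  rfl

lemma norm_toEuclideanLin_le {m n : Type*} [Fintype m] [Fintype n] [DecidableEq n]
    (W : Matrix m n ℝ) :
    ‖LinearMap.toContinuousLinearMap (toEuclideanLin W)‖ ≤ √(∑ i, ∑ j, W i j ^ 2) := by
  refine ContinuousLinearMap.opNorm_le_bound _ (Real.sqrt_nonneg _) fun v ↦ ?_
  rw [EuclideanSpace.norm_eq, EuclideanSpace.norm_eq, ← Real.sqrt_mul (by positivity),
    Finset.sum_mul]
  gcongr √(∑ _, ?_) with i
  simpa [mulVec, dotProduct] using Finset.sum_mul_sq_le_sq_mul_sq Finset.univ (W i) v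

lemma norm_weightL_sq_add_norm_biasL_sq_add_norm_truncL_sq_le (Θ : ParamSpace ℓ (u + 1)) :
    ‖weightL ℓ u Θ‖ ^ 2 + ‖biasL ℓ u Θ‖ ^ 2 + ‖truncL ℓ u Θ‖ ^ 2 ≤ ‖Θ‖ ^ 2 := by
  have hweight : ‖weightL ℓ u Θ‖ ^ 2 ≤ ∑ i, ∑ j, Θ ⟨Fin.last u, Sum.inl (i, j)⟩ ^ 2 :=
    (Real.le_sqrt (norm_nonneg _) (by positivity)).1 (norm_toEuclideanLin_le _)
  have hsplit : ‖Θ‖ ^ 2 = ‖truncL ℓ u Θ‖ ^ 2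
      + ((∑ i, ∑ j, Θ ⟨Fin.last u, Sum.inl (i, j)⟩ ^ 2) + ‖biasL ℓ u Θ‖ ^ 2) := by
    simp only [EuclideanSpace.real_norm_sq_eq, Fintype.sum_sigma, Fin.sum_univ_castSucc,
      Fintype.sum_sum_type, Fintype.sum_prod_type]
    rfl
  linarith

variable {σ : ℕ → ℝ → ℝ} {σmax σ'max σ''max BΩ S b L K : ℝ} {ζ : Fin (ℓ 0) → ℝ}

lemma HasC11Bounds.net_succ (hBΩ : 0 < BΩ) (hσd : Differentiable ℝ (σ (u + 1)))
    (hσb : ∀ x, |σ (u + 1) x| ≤ σmax) (hσ' : ∀ x, |deriv (σ (u + 1)) x| ≤ σ'max)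
    (hσ'' : ∀ x y, |deriv (σ (u + 1)) x - deriv (σ (u + 1)) y| ≤ σ''max * |x - y|)
    (h : HasC11Bounds (net ℓ σ ζ u) (ball 0 BΩ) b L K) :
    HasC11Bounds (net ℓ σ ζ (u + 1)) (ball 0 BΩ) (BN ℓ σmax (u + 1)) (layerLip σ'max BΩ b L)
      (layerGradLip (ℓ (u + 1)) σ'max σ''max BΩ b L K) := by
  have hact := hasC11Bounds_coordwise (ι := Fin (ℓ (u + 1))) hσd hσb hσ' hσ''
  have hnet : HasC11Bounds (net ℓ σ ζ (u + 1)) (ball 0 BΩ) (BN ℓ σmax (u + 1))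
      (layerLip σ'max BΩ b L) (layerGradLip 1 σ'max σ''max BΩ b L K) := by
    simpa only [net_succ_eq_comp_preactivation, BN, Fintype.card_fin] using
      hact.comp_preactivation h norm_weightL_sq_add_norm_biasL_sq_add_norm_truncL_sq_le
  -- The constant increases with the width, so only width `0` falls below `k = 1`.
  rcases isEmpty_or_nonempty (Fin (ℓ (u + 1))) with _ | hwidth
  · refine { hnet with
      lipschitz_nonneg := Real.sqrt_nonneg _
      norm_fderiv_sub_le := fun x _ y _ ↦ ?_ }
    rw [Subsingleton.elim (fderiv ℝ (net ℓ σ ζ (u + 1)) x) (fderiv ℝ (net ℓ σ ζ (u + 1)) y),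
      sub_self, norm_zero]
    exact mul_nonneg (Real.sqrt_nonneg _) (norm_nonneg _)
  · exact hnet.mono_lipschitz <| layerGradLip_mono zero_le_one
      (mod_cast Fin.pos_iff_nonempty.2 hwidth)
      ((abs_nonneg _).trans (hσ' 0)) hact.lipschitz_nonneg hBΩ.le h.lipschitz_nonneg

lemma hasC11Bounds_net (hBΩ : 0 < BΩ) (hσd : ∀ u, Differentiable ℝ (σ u))
    (hσb : ∀ u x, |σ u x| ≤ σmax) (hσ' : ∀ u x, |deriv (σ u) x| ≤ σ'max)
    (hσ'' : ∀ u x y, |deriv (σ u) x - deriv (σ u) y| ≤ σ''max * |x - y|)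
    (hS : S = √(∑ j, ζ j ^ 2)) (u : ℕ) :
    HasC11Bounds (net ℓ σ ζ (u + 1)) (ball 0 BΩ) (BN ℓ σmax (u + 1))
      (LN ℓ σmax σ'max BΩ S (u + 1)) (LgN ℓ σmax σ'max σ''max BΩ S (u + 1)) := by
  induction u with
  | zero =>
    have hinput : HasC11Bounds (net ℓ σ ζ 0) (ball 0 BΩ) S 0 0 :=
      .const (by simp [hS, EuclideanSpace.norm_eq])
    have hσ''max : 0 ≤ σ''max := by simpa using (abs_nonneg _).trans (hσ'' 0 1 0)
    have hfirst := hinput.net_succ hBΩ (hσd 1) (hσb 1) (hσ' 1) (hσ'' 1)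
    rw [layerGradLip_zero hσ''max] at hfirst
    simpa [LN, LgN, layerLip] using hfirst
  | succ u ih => exact ih.net_succ hBΩ (hσd _) (hσb _) (hσ' _) (hσ'' _)

end Network

theorem statement7_general (ℓ : ℕ → ℕ) (σ : ℕ → ℝ → ℝ)
    (σmax σ'max σ''max BΩ : ℝ) (hBΩ : 0 < BΩ) (hσd : ∀ u, Differentiable ℝ (σ u))
    (hσb : ∀ u x, |σ u x| ≤ σmax) (hσ' : ∀ u x, |deriv (σ u) x| ≤ σ'max)
    (hσ'' : ∀ u x y, |deriv (σ u) x - deriv (σ u) y| ≤ σ''max * |x - y|)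
    (ζ : Fin (ℓ 0) → ℝ) (S : ℝ) (hS : S = √(∑ j, ζ j ^ 2)) (u : ℕ) (hu : 1 ≤ u) :
    Differentiable ℝ (net ℓ σ ζ u) ∧
      (∀ Θ Θ' : ParamSpace ℓ u, ‖Θ‖ < BΩ → ‖Θ'‖ < BΩ →
        ‖net ℓ σ ζ u Θ - net ℓ σ ζ u Θ'‖ ≤ LN ℓ σmax σ'max BΩ S u * ‖Θ - Θ'‖) ∧
      (∀ Θ : ParamSpace ℓ u, ‖net ℓ σ ζ u Θ‖ ≤ BN ℓ σmax u) ∧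
      (∀ Θ : ParamSpace ℓ u, ‖Θ‖ < BΩ →
        ‖fderiv ℝ (net ℓ σ ζ u) Θ‖ ≤ LN ℓ σmax σ'max BΩ S u) ∧
      (∀ Θ Θ' : ParamSpace ℓ u, ‖Θ‖ < BΩ → ‖Θ'‖ < BΩ →
        ‖fderiv ℝ (net ℓ σ ζ u) Θ - fderiv ℝ (net ℓ σ ζ u) Θ'‖
          ≤ LgN ℓ σmax σ'max σ''max BΩ S u * ‖Θ - Θ'‖) := by
  obtain ⟨v, rfl⟩ := Nat.exists_eq_add_of_le' hu
  have h := hasC11Bounds_net hBΩ hσd hσb hσ' hσ'' hS v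
  simp only [← mem_ball_zero_iff]
  exact ⟨h.differentiable, fun _ _ ↦ h.norm_sub_le (convex_ball 0 BΩ), h.norm_le,
    h.norm_fderiv_le, fun Θ Θ' hΘ hΘ' ↦ h.norm_fderiv_sub_le Θ hΘ Θ' hΘ'⟩

/-- for every 1 ≤ u ≤ m the layer map N_u and its gradient ∇N_u are Lipschitz
continuous (on the parameter region ‖Θ‖ < B_Ω) with the recursively defined constants
L_{N_u}, L_{∇N_u}, N_u is uniformly bounded by B_{N_u} = √ℓ_u·σ_max, and ∇N_u is
uniformly bounded by B_{∇N_u} = L_{N_u}. -/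
theorem statement7 (m : ℕ) (ℓ : ℕ → ℕ) (σ : ℕ → ℝ → ℝ)
    (σmax σ'max σ''max BΩ : ℝ) (hBΩ : 0 < BΩ)
    (hσd : ∀ u, Differentiable ℝ (σ u)) (hσd2 : ∀ u, Differentiable ℝ (deriv (σ u)))
    (hσb : ∀ u x, |σ u x| ≤ σmax) (hσ' : ∀ u x, |deriv (σ u) x| ≤ σ'max)
    (hσ'' : ∀ u x, |deriv (deriv (σ u)) x| ≤ σ''max)
    (ζ : Fin (ℓ 0) → ℝ) (S : ℝ) (hS : S = Real.sqrt (∑ j, (ζ j) ^ 2)) :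
    ∀ u, 1 ≤ u → u ≤ m →
      (∀ Θ Θ' : ParamSpace ℓ u, ‖Θ‖ < BΩ → ‖Θ'‖ < BΩ →
        ‖net ℓ σ ζ u Θ - net ℓ σ ζ u Θ'‖ ≤ LN ℓ σmax σ'max BΩ S u * ‖Θ - Θ'‖) ∧
      (∀ Θ : ParamSpace ℓ u, ‖net ℓ σ ζ u Θ‖ ≤ BN ℓ σmax u) ∧
      (∀ Θ : ParamSpace ℓ u, ‖Θ‖ < BΩ →
        ‖fderiv ℝ (net ℓ σ ζ u) Θ‖ ≤ LN ℓ σmax σ'max BΩ S u) ∧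
      (∀ Θ Θ' : ParamSpace ℓ u, ‖Θ‖ < BΩ → ‖Θ'‖ < BΩ →
        ‖fderiv ℝ (net ℓ σ ζ u) Θ - fderiv ℝ (net ℓ σ ζ u) Θ'‖
          ≤ LgN ℓ σmax σ'max σ''max BΩ S u * ‖Θ - Θ'‖) := by
  intro u hu _
  exact (statement7_general ℓ σ σmax σ'max σ''max BΩ hBΩ hσd hσb hσ' (fun v _ _ ↦
    convex_univ.norm_image_sub_le_of_norm_deriv_le (fun x _ ↦ hσd2 v x) (fun x _ ↦ hσ'' v x)
      (Set.mem_univ _) (Set.mem_univ _)) ζ S hS u hu).2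
end

section
/- (Theorem on the Lipschitz constant of the full network.) Assume the parameter space Ω is non-empty, open and bounded: ‖Θ‖ < B_Ω for all Θ ∈ Ω. Fix an input ζ_x with S = ‖ζ_x‖, and let L_{N_m}, L_{∇N_m}, B_{N_m} be the constants from the layerwise recursion for the m hidden layers. Then the full network map N(Θ) = f_{θ_{m+1}}(N_m(Θ_m)) and its gradient ∇N (with respect to all parameters Θ = Θ_{m+1}) are Lipschitz continuous on Ω with constants L_N = √(B_Ω²L_{N_m}² + B_{N_m}² + 1) and L_{∇N} = √(3L_{N_m}²ℓ_{m+1} + ℓ_{m+1}²B_Ω²L_{∇N_m}² + L_{N_m}²ℓ_{m+1}²), and ∇N is uniformly bounded by B_{∇N} = L_N. -/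
open scoped BigOperators

/-- The full network N(Θ_{m+1}) = f_{θ_{m+1}}(N_m(Θ_m)) = A^{(m+1)} N_m(Θ_m) + b^{(m+1)}. -/
noncomputable def netFull (ℓ : ℕ → ℕ) (σ : ℕ → ℝ → ℝ) (ζ : Fin (ℓ 0) → ℝ) (m : ℕ)
    (Θ : ParamSpace ℓ (m + 1)) : EuclideanSpace ℝ (Fin (ℓ (m + 1))) :=
  (WithLp.equiv 2 _).symm fun i =>
    (∑ j, Θ ⟨⟨m, Nat.lt_succ_self m⟩, Sum.inl (i, j)⟩ * net ℓ σ ζ m (trunc Θ) j) +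
      Θ ⟨⟨m, Nat.lt_succ_self m⟩, Sum.inr i⟩

/-! A layer is the composition of a `C^{1,1}` componentwise activation with an affine layer
`Θ ↦ A g(Θ₋) + b`, where `Θ₋` are the parameters of the previous layers and `g` is their output.
As `(Θ₋, A, b)` are orthogonal components of `Θ`, each bound on a layer or on its derivative is
first obtained in the form `p ‖Θ₋‖ + q ‖A‖ + r ‖b‖` and then turned into `√(p² + q² + r²) ‖Θ‖` by
Cauchy–Schwarz. In the gradient of a hidden layer, the increment of the pre-activation has to be
kept in its three-component form until the end: bounding it by a multiple of `‖Θ - Θ'‖` at once does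
not lead to the recursive constant. The width factors in the constants cost nothing, since they are
at least `1` unless the layer is empty. -/

namespace FeedForward

section C11

variable {E F : Type*} [NormedAddCommGroup E] [NormedSpace ℝ E] [NormedAddCommGroup F]
  [NormedSpace ℝ F] {f : E → F} {s : Set E} {L G G' : ℝ}

/-- Quantitative `C^{1,1}` regularity: `f` is differentiable at the points of `s`, where its
derivative is bounded by `L` and is `G`-Lipschitz in the operator norm. -/
structure C11BoundOn (f : E → F) (s : Set E) (L G : ℝ) : Prop where
  differentiableAt : ∀ x ∈ s, DifferentiableAt ℝ f x
  norm_fderiv_le : ∀ x ∈ s, ‖fderiv ℝ f x‖ ≤ L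
  norm_fderiv_sub_le : ∀ x ∈ s, ∀ y ∈ s, ‖fderiv ℝ f x - fderiv ℝ f y‖ ≤ G * ‖x - y‖

namespace C11BoundOn

lemma norm_sub_le (hf : C11BoundOn f s L G) (hs : Convex ℝ s) {x y : E} (hx : x ∈ s)
    (hy : y ∈ s) : ‖f x - f y‖ ≤ L * ‖x - y‖ :=
  hs.norm_image_sub_le_of_norm_fderiv_le hf.differentiableAt hf.norm_fderiv_le hy hx

lemma bound_nonneg (hf : C11BoundOn f s L G) (hs : s.Nonempty) : 0 ≤ L :=
  let ⟨x, hx⟩ := hs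
  (norm_nonneg _).trans (hf.norm_fderiv_le x hx)

lemma lipschitz_nonneg (hf : C11BoundOn f s L G) (hs : s.Nontrivial) : 0 ≤ G :=
  let ⟨x, hx, y, hy, hxy⟩ := hs
  nonneg_of_mul_nonneg_left ((norm_nonneg _).trans (hf.norm_fderiv_sub_le x hx y hy))
    (norm_sub_pos_iff.2 hxy)

lemma mono_lipschitz (hf : C11BoundOn f s L G) (hG : s.Nonempty → G ≤ G') :
    C11BoundOn f s L G' where
  differentiableAt := hf.differentiableAt
  norm_fderiv_le := hf.norm_fderiv_le
  norm_fderiv_sub_le x hx y hy := (hf.norm_fderiv_sub_le x hx y hy).trans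
    (mul_le_mul_of_nonneg_right (hG ⟨x, hx⟩) (norm_nonneg _))

lemma of_deriv {φ : ℝ → ℝ} (hφ : Differentiable ℝ φ) (hL : ∀ x, |deriv φ x| ≤ L)
    (hφ' : Differentiable ℝ (deriv φ)) (hG : ∀ x, |deriv (deriv φ) x| ≤ G) :
    C11BoundOn φ Set.univ L G where
  differentiableAt x _ := hφ x
  norm_fderiv_le x _ := (norm_deriv_eq_norm_fderiv (f := φ)).symm.trans_le (hL x)
  norm_fderiv_sub_le x _ y _ := by
    have hmvt : ‖deriv φ x - deriv φ y‖ ≤ G * ‖x - y‖ :=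
      convex_univ.norm_image_sub_le_of_norm_deriv_le (fun z _ => hφ' z) (fun z _ => hG z)
        trivial trivial
    have hfderiv : fderiv ℝ φ x - fderiv ℝ φ y =
        ContinuousLinearMap.toSpanSingleton ℝ (deriv φ x - deriv φ y) := by
      ext
      simp
    rwa [hfderiv, ContinuousLinearMap.norm_toSpanSingleton]

end C11BoundOn

lemma c11BoundOn_const (c : F) : C11BoundOn (fun _ : E => c) s 0 0 where
  differentiableAt _ _ := differentiableAt_const c
  norm_fderiv_le _ _ := by simp
  norm_fderiv_sub_le _ _ _ _ := by simp

lemma C11BoundOn.mono_of_one_le_dim {n : ℕ} {f : E → EuclideanSpace ℝ (Fin n)}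
    (hf : C11BoundOn f s L G) (hG' : 0 ≤ G') (h : s.Nonempty → 1 ≤ n → G ≤ G') :
    C11BoundOn f s L G' := by
  rcases n.eq_zero_or_pos with rfl | hn
  · refine ⟨hf.differentiableAt, hf.norm_fderiv_le, fun x _ y _ => ?_⟩
    rw [Subsingleton.elim (fderiv ℝ f x - fderiv ℝ f y) 0, norm_zero]
    positivity
  · exact hf.mono_lipschitz fun hs => h hs hn

end C11

section Componentwise

variable {ι : Type*} {φ : ℝ → ℝ} {a s t : ℝ}

/-- The componentwise action of a scalar activation `φ` on a layer with units `ι`. -/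
noncomputable def componentwise (φ : ℝ → ℝ) (x : EuclideanSpace ℝ ι) : EuclideanSpace ℝ ι :=
  WithLp.toLp 2 fun i => φ (x i)

lemma norm_le_mul_norm_of_forall_abs_le [Fintype ι] {x y : EuclideanSpace ℝ ι} (hs : 0 ≤ s)
    (h : ∀ i, |x i| ≤ s * |y i|) : ‖x‖ ≤ s * ‖y‖ := by
  refine le_of_sq_le_sq ?_ (by positivity)
  simp only [mul_pow, EuclideanSpace.real_norm_sq_eq, Finset.mul_sum]
  refine Finset.sum_le_sum fun i _ => ?_
  rw [← sq_abs (x i), ← sq_abs (y i), ← mul_pow]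
  gcongr
  exact h i

lemma norm_componentwise_le [Fintype ι] (hφ : ∀ x, |φ x| ≤ a) (x : EuclideanSpace ℝ ι) :
    ‖componentwise φ x‖ ≤ √(Fintype.card ι) * a := by
  have ha : 0 ≤ a := (abs_nonneg _).trans (hφ 0)
  calc ‖componentwise φ x‖ = √(∑ i, |φ (x i)| ^ 2) := EuclideanSpace.norm_eq _
    _ ≤ √(∑ _i : ι, a ^ 2) := by gcongr with i; exact hφ _
    _ = √(Fintype.card ι) * a := by
      rw [Finset.sum_const, Finset.card_univ, nsmul_eq_mul, Real.sqrt_mul (Nat.cast_nonneg _),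
        Real.sqrt_sq ha]

lemma differentiable_componentwise [Finite ι] (hφ : Differentiable ℝ φ) :
    Differentiable ℝ (componentwise φ : EuclideanSpace ℝ ι → _) :=
  have := Fintype.ofFinite ι
  differentiable_euclidean.2 fun i =>
    hφ.comp (EuclideanSpace.proj i : EuclideanSpace ℝ ι →L[ℝ] ℝ).differentiable

lemma fderiv_componentwise_apply [Finite ι] (hφ : Differentiable ℝ φ)
    (x v : EuclideanSpace ℝ ι) (i : ι) :
    fderiv ℝ (componentwise φ) x v i = fderiv ℝ φ (x i) (v i) := by
  have := Fintype.ofFinite ι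
  let π : EuclideanSpace ℝ ι →L[ℝ] ℝ := EuclideanSpace.proj i
  have hleft := π.hasFDerivAt.comp x (differentiable_componentwise hφ x).hasFDerivAt
  have hright := (hφ (x i)).hasFDerivAt.comp x π.hasFDerivAt
  exact DFunLike.congr_fun (hleft.unique hright) v

lemma c11BoundOn_componentwise [Fintype ι] (hφ : C11BoundOn φ Set.univ s t) :
    C11BoundOn (componentwise φ : EuclideanSpace ℝ ι → _) Set.univ s t := by
  have hs : 0 ≤ s := hφ.bound_nonneg Set.univ_nonempty
  have ht : 0 ≤ t := hφ.lipschitz_nonneg Set.nontrivial_univ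
  have hd : Differentiable ℝ φ := fun x => hφ.differentiableAt x trivial
  refine ⟨fun x _ => differentiable_componentwise hd x, fun x _ => ?_, fun x _ y _ => ?_⟩
  · refine ContinuousLinearMap.opNorm_le_bound _ hs fun v =>
      norm_le_mul_norm_of_forall_abs_le hs fun i => ?_
    rw [fderiv_componentwise_apply hd]
    exact ContinuousLinearMap.le_of_opNorm_le _ (hφ.norm_fderiv_le _ trivial) _
  · refine ContinuousLinearMap.opNorm_le_bound _ (by positivity) fun v =>
      norm_le_mul_norm_of_forall_abs_le (by positivity) fun i => ?_
    have hcoord : |x i - y i| ≤ ‖x - y‖ := PiLp.norm_apply_le (x - y) i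
    rw [sub_apply, PiLp.sub_apply, fderiv_componentwise_apply hd, fderiv_componentwise_apply hd]
    exact ContinuousLinearMap.le_of_opNorm_le (fderiv ℝ φ (x i) - fderiv ℝ φ (y i))
      ((hφ.norm_fderiv_sub_le _ trivial _ trivial).trans (by gcongr; exact hcoord)) (v i)

end Componentwise

section Inequalities

lemma add_mul_sq_le (a b x y : ℝ) : (a * x + b * y) ^ 2 ≤ (a ^ 2 + b ^ 2) * (x ^ 2 + y ^ 2) := by
  simpa [Fin.sum_univ_two] using Finset.sum_mul_sq_le_sq_mul_sq Finset.univ ![a, b] ![x, y]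

lemma add_add_mul_le_sqrt_mul_sqrt (a b c x y z : ℝ) :
    a * x + b * y + c * z ≤ √(a ^ 2 + b ^ 2 + c ^ 2) * √(x ^ 2 + y ^ 2 + z ^ 2) := by
  simpa [Fin.sum_univ_three] using
    Real.sum_mul_le_sqrt_mul_sqrt Finset.univ ![a, b, c] ![x, y, z]

lemma add_add_sq_le (a b c : ℝ) : (a + b + c) ^ 2 ≤ 3 * (a ^ 2 + b ^ 2 + c ^ 2) := by
  simpa [Fin.sum_univ_three] using
    sq_sum_le_card_mul_sum_sq (s := Finset.univ) (f := ![a, b, c])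

end Inequalities

section Layer

/-- The Lipschitz constant of an affine layer, in terms of a bound `W` on the parameters and of the
bound `B` and the Lipschitz constant `L` of the previous layers. -/
noncomputable def affineLip (W B L : ℝ) : ℝ := √(W ^ 2 * L ^ 2 + B ^ 2 + 1)

/-- Coordinates on the parameters `P` of a network with one more layer: the parameters `E` of the
previous layers together with the weight `M` and the bias `V` of the last one, the three components
being orthogonal. -/
structure LayerSplitting (P E M V : Type*) [NormedAddCommGroup P] [NormedSpace ℝ P]
    [NormedAddCommGroup E] [NormedSpace ℝ E] [NormedAddCommGroup M] [NormedSpace ℝ M]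
    [NormedAddCommGroup V] [NormedSpace ℝ V] where
  prev : P →L[ℝ] E
  weight : P →L[ℝ] M
  bias : P →L[ℝ] V
  norm_sq_eq : ∀ Θ, ‖Θ‖ ^ 2 = ‖prev Θ‖ ^ 2 + ‖weight Θ‖ ^ 2 + ‖bias Θ‖ ^ 2

variable {P E M F V V' : Type*} [NormedAddCommGroup P] [NormedSpace ℝ P]
  [NormedAddCommGroup E] [NormedSpace ℝ E] [NormedAddCommGroup M] [NormedSpace ℝ M]
  [NormedAddCommGroup F] [NormedSpace ℝ F] [NormedAddCommGroup V] [NormedSpace ℝ V]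
  [NormedAddCommGroup V'] [NormedSpace ℝ V']

namespace LayerSplitting

variable (c : LayerSplitting P E M V) {β : M →L[ℝ] F →L[ℝ] V} {g : E → F} {W B L G : ℝ}
  {Θ Θ' : P}

lemma norm_prev_le (Θ : P) : ‖c.prev Θ‖ ≤ ‖Θ‖ :=
  le_of_sq_le_sq (by linarith [c.norm_sq_eq Θ, sq_nonneg ‖c.weight Θ‖, sq_nonneg ‖c.bias Θ‖])
    (norm_nonneg _)

lemma norm_weight_le (Θ : P) : ‖c.weight Θ‖ ≤ ‖Θ‖ :=
  le_of_sq_le_sq (by linarith [c.norm_sq_eq Θ, sq_nonneg ‖c.prev Θ‖, sq_nonneg ‖c.bias Θ‖])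
    (norm_nonneg _)

lemma prev_mem_ball (hΘ : Θ ∈ Metric.ball 0 W) : c.prev Θ ∈ Metric.ball 0 W := by
  rw [mem_ball_zero_iff] at hΘ ⊢
  exact (c.norm_prev_le Θ).trans_lt hΘ

lemma norm_weight_le_of_mem_ball (hΘ : Θ ∈ Metric.ball 0 W) : ‖c.weight Θ‖ ≤ W :=
  (c.norm_weight_le Θ).trans (mem_ball_zero_iff.1 hΘ).le

lemma linearCombination_norm_le (a b d : ℝ) (H : P) :
    a * ‖c.prev H‖ + b * ‖c.weight H‖ + d * ‖c.bias H‖ ≤ √(a ^ 2 + b ^ 2 + d ^ 2) * ‖H‖ := by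
  simpa [← c.norm_sq_eq] using
    add_add_mul_le_sqrt_mul_sqrt a b d ‖c.prev H‖ ‖c.weight H‖ ‖c.bias H‖

/-- The pre-activation `A g(Θ₋) + b` of the last layer, where `g` is the output of the previous
layers and `β` is the product of a weight with a vector. -/
noncomputable def affine (β : M →L[ℝ] F →L[ℝ] V) (g : E → F) (Θ : P) : V :=
  β (c.weight Θ) (g (c.prev Θ)) + c.bias Θ

lemma hasFDerivAt_affine (hg : DifferentiableAt ℝ g (c.prev Θ)) :
    HasFDerivAt (c.affine β g)
      (β.precompR P (c.weight Θ) (fderiv ℝ g (c.prev Θ) ∘L c.prev) +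
        β.precompL P c.weight (g (c.prev Θ)) + c.bias) Θ :=
  (β.hasFDerivAt_of_bilinear c.weight.hasFDerivAt
    (hg.hasFDerivAt.comp Θ c.prev.hasFDerivAt)).add c.bias.hasFDerivAt

lemma fderiv_affine_apply (hg : DifferentiableAt ℝ g (c.prev Θ)) (H : P) :
    fderiv ℝ (c.affine β g) Θ H =
      β (c.weight Θ) (fderiv ℝ g (c.prev Θ) (c.prev H)) + β (c.weight H) (g (c.prev Θ))
        + c.bias H := by
  rw [(c.hasFDerivAt_affine hg).fderiv]
  rfl

lemma norm_fderiv_affine_apply_le (hβ : ‖β‖ ≤ 1)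
    (hg : C11BoundOn g (Metric.ball 0 W) L G) (hB : ∀ x ∈ Metric.ball 0 W, ‖g x‖ ≤ B)
    (hΘ : Θ ∈ Metric.ball 0 W) (H : P) :
    ‖fderiv ℝ (c.affine β g) Θ H‖ ≤
      W * L * ‖c.prev H‖ + B * ‖c.weight H‖ + ‖c.bias H‖ := by
  have hprev := c.prev_mem_ball hΘ
  rw [c.fderiv_affine_apply (hg.differentiableAt _ hprev)]
  refine norm_add₃_le.trans (add_le_add_left (add_le_add ?_ ?_) _)
  · calc _ ≤ 1 * W * (L * ‖c.prev H‖) :=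
          β.le_of_opNorm₂_le_of_le hβ (c.norm_weight_le_of_mem_ball hΘ)
            (ContinuousLinearMap.le_of_opNorm_le _ (hg.norm_fderiv_le _ hprev) _)
      _ = W * L * ‖c.prev H‖ := by ring
  · calc _ ≤ 1 * ‖c.weight H‖ * B := β.le_of_opNorm₂_le_of_le hβ le_rfl (hB _ hprev)
      _ = B * ‖c.weight H‖ := by ring

lemma norm_affine_sub_le (hβ : ‖β‖ ≤ 1)
    (hg : C11BoundOn g (Metric.ball 0 W) L G) (hB : ∀ x ∈ Metric.ball 0 W, ‖g x‖ ≤ B)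
    (hΘ : Θ ∈ Metric.ball 0 W) (hΘ' : Θ' ∈ Metric.ball 0 W) :
    ‖c.affine β g Θ - c.affine β g Θ'‖ ≤
      W * L * ‖c.prev (Θ - Θ')‖ + B * ‖c.weight (Θ - Θ')‖ + ‖c.bias (Θ - Θ')‖ := by
  have hprev := c.prev_mem_ball hΘ
  have hprev' := c.prev_mem_ball hΘ'
  have hsub : c.affine β g Θ - c.affine β g Θ' =
      β (c.weight Θ) (g (c.prev Θ) - g (c.prev Θ')) + β (c.weight (Θ - Θ')) (g (c.prev Θ'))
        + c.bias (Θ - Θ') := by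
    simp only [affine, map_sub, sub_apply]
    abel
  have hlip := hg.norm_sub_le (convex_ball 0 W) hprev hprev'
  rw [← map_sub] at hlip
  rw [hsub]
  refine norm_add₃_le.trans (add_le_add_left (add_le_add ?_ ?_) _)
  · calc _ ≤ 1 * W * (L * ‖c.prev (Θ - Θ')‖) :=
          β.le_of_opNorm₂_le_of_le hβ (c.norm_weight_le_of_mem_ball hΘ) hlip
      _ = W * L * ‖c.prev (Θ - Θ')‖ := by ring
  · calc _ ≤ 1 * ‖c.weight (Θ - Θ')‖ * B := β.le_of_opNorm₂_le_of_le hβ le_rfl (hB _ hprev')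
      _ = B * ‖c.weight (Θ - Θ')‖ := by ring

lemma norm_fderiv_affine_sub_apply_le (hβ : ‖β‖ ≤ 1) (hg : C11BoundOn g (Metric.ball 0 W) L G)
    (hΘ : Θ ∈ Metric.ball 0 W) (hΘ' : Θ' ∈ Metric.ball 0 W) (H : P) :
    ‖fderiv ℝ (c.affine β g) Θ H - fderiv ℝ (c.affine β g) Θ' H‖ ≤
      (W * G * ‖c.prev (Θ - Θ')‖ + L * ‖c.weight (Θ - Θ')‖) * ‖c.prev H‖
        + L * ‖c.prev (Θ - Θ')‖ * ‖c.weight H‖ := by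
  have hprev := c.prev_mem_ball hΘ
  have hprev' := c.prev_mem_ball hΘ'
  have hsub : fderiv ℝ (c.affine β g) Θ H - fderiv ℝ (c.affine β g) Θ' H =
      β (c.weight Θ) ((fderiv ℝ g (c.prev Θ) - fderiv ℝ g (c.prev Θ')) (c.prev H))
        + β (c.weight (Θ - Θ')) (fderiv ℝ g (c.prev Θ') (c.prev H))
        + β (c.weight H) (g (c.prev Θ) - g (c.prev Θ')) := by
    simp only [c.fderiv_affine_apply (hg.differentiableAt _ hprev),
      c.fderiv_affine_apply (hg.differentiableAt _ hprev'), map_sub, sub_apply]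
    abel
  have hlip := hg.norm_sub_le (convex_ball 0 W) hprev hprev'
  have hdlip := hg.norm_fderiv_sub_le _ hprev _ hprev'
  rw [← map_sub] at hlip hdlip
  rw [hsub]
  calc _ ≤ 1 * W * (G * ‖c.prev (Θ - Θ')‖ * ‖c.prev H‖)
        + 1 * ‖c.weight (Θ - Θ')‖ * (L * ‖c.prev H‖)
        + 1 * ‖c.weight H‖ * (L * ‖c.prev (Θ - Θ')‖) := by
        refine norm_add₃_le.trans (add_le_add_three ?_ ?_ ?_)
        · exact β.le_of_opNorm₂_le_of_le hβ (c.norm_weight_le_of_mem_ball hΘ)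
            (ContinuousLinearMap.le_of_opNorm_le _ hdlip _)
        · exact β.le_of_opNorm₂_le_of_le hβ le_rfl
            (ContinuousLinearMap.le_of_opNorm_le _ (hg.norm_fderiv_le _ hprev') _)
        · exact β.le_of_opNorm₂_le_of_le hβ le_rfl hlip
    _ = _ := by ring

lemma linearCombination_norm_le_affineLip (H : P) :
    W * L * ‖c.prev H‖ + B * ‖c.weight H‖ + ‖c.bias H‖ ≤ affineLip W B L * ‖H‖ := by
  simpa [affineLip, mul_pow] using c.linearCombination_norm_le (W * L) B 1 H

lemma norm_fderiv_affine_le (hβ : ‖β‖ ≤ 1)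
    (hg : C11BoundOn g (Metric.ball 0 W) L G) (hB : ∀ x ∈ Metric.ball 0 W, ‖g x‖ ≤ B)
    (hΘ : Θ ∈ Metric.ball 0 W) : ‖fderiv ℝ (c.affine β g) Θ‖ ≤ affineLip W B L :=
  ContinuousLinearMap.opNorm_le_bound _ (Real.sqrt_nonneg _) fun H =>
    (c.norm_fderiv_affine_apply_le hβ hg hB hΘ H).trans (c.linearCombination_norm_le_affineLip H)

lemma c11BoundOn_affine (hβ : ‖β‖ ≤ 1)
    (hg : C11BoundOn g (Metric.ball 0 W) L G) (hB : ∀ x ∈ Metric.ball 0 W, ‖g x‖ ≤ B) :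
    C11BoundOn (c.affine β g) (Metric.ball 0 W) (affineLip W B L)
      √(W ^ 2 * G ^ 2 + 2 * L ^ 2) := by
  refine ⟨fun Θ hΘ => (c.hasFDerivAt_affine
    (hg.differentiableAt _ (c.prev_mem_ball hΘ))).differentiableAt,
    fun Θ hΘ => c.norm_fderiv_affine_le hβ hg hB hΘ, fun Θ hΘ Θ' hΘ' => ?_⟩
  refine ContinuousLinearMap.opNorm_le_bound _ (by positivity) fun H => ?_
  have hcoeff : (W * G * ‖c.prev (Θ - Θ')‖ + L * ‖c.weight (Θ - Θ')‖) ^ 2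
      + (L * ‖c.prev (Θ - Θ')‖) ^ 2 + 0 ^ 2 ≤ (W ^ 2 * G ^ 2 + 2 * L ^ 2) * ‖Θ - Θ'‖ ^ 2 := by
    rw [c.norm_sq_eq (Θ - Θ')]
    nlinarith [add_mul_sq_le (W * G) L ‖c.prev (Θ - Θ')‖ ‖c.weight (Θ - Θ')‖,
      mul_nonneg (sq_nonneg (W * G)) (sq_nonneg ‖c.bias (Θ - Θ')‖),
      mul_nonneg (sq_nonneg L) (sq_nonneg ‖c.bias (Θ - Θ')‖),
      mul_nonneg (sq_nonneg L) (sq_nonneg ‖c.weight (Θ - Θ')‖)]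
  calc ‖(fderiv ℝ (c.affine β g) Θ - fderiv ℝ (c.affine β g) Θ') H‖
      ≤ (W * G * ‖c.prev (Θ - Θ')‖ + L * ‖c.weight (Θ - Θ')‖) * ‖c.prev H‖
        + L * ‖c.prev (Θ - Θ')‖ * ‖c.weight H‖ + 0 * ‖c.bias H‖ := by
        simpa using c.norm_fderiv_affine_sub_apply_le hβ hg hΘ hΘ' H
    _ ≤ _ := c.linearCombination_norm_le _ _ _ H
    _ ≤ √((W ^ 2 * G ^ 2 + 2 * L ^ 2) * ‖Θ - Θ'‖ ^ 2) * ‖H‖ := by gcongr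
    _ = √(W ^ 2 * G ^ 2 + 2 * L ^ 2) * ‖Θ - Θ'‖ * ‖H‖ := by
        rw [Real.sqrt_mul (by positivity), Real.sqrt_sq (norm_nonneg _)]

end LayerSplitting

/-- The Lipschitz constant of the gradient of a hidden layer of width `l`: `W` bounds the
parameters, `s` and `t` bound the derivative of the activation and its Lipschitz constant, and `B`,
`L`, `G` bound the previous layers, their gradient, and its Lipschitz constant. -/
noncomputable def hiddenGradLip (W s t l B L G : ℝ) : ℝ :=
  √(max (3 * L ^ 2 * (s ^ 2 * l + t ^ 2 * W ^ 2 * B ^ 2) + 2 * t ^ 2 * W ^ 2 * L ^ 2)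
      (t ^ 2 * (B ^ 2 + 1) * (3 * B ^ 2 + 2))
    + ((l * s * W * G + t * W ^ 2 * L ^ 2) ^ 2
      + L ^ 2 * (l * s + W * t * √(B ^ 2 + 1)) ^ 2))

lemma hiddenGradLip_mono {W s t l l' B L G : ℝ} (hW : 0 ≤ W) (hs : 0 ≤ s) (ht : 0 ≤ t)
    (hG : 0 ≤ G) (hl : 0 ≤ l) (h : l ≤ l') :
    hiddenGradLip W s t l B L G ≤ hiddenGradLip W s t l' B L G := by
  unfold hiddenGradLip
  gcongr

lemma prev_coeff_sq_le {W s t B L G D a b : ℝ} (hW : 0 ≤ W) (hs : 0 ≤ s) (ht : 0 ≤ t)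
    (hL : 0 ≤ L) (hG : 0 ≤ G) (hB : 0 ≤ B) (hD : 0 ≤ D) (ha : 0 ≤ a) (hb : 0 ≤ b) :
    (s * (W * G * D + L * a) + t * (W * L * D + B * a + b) * (W * L)) ^ 2 ≤
      ((s * W * G + t * W ^ 2 * L ^ 2) ^ 2 + L ^ 2 * (s + W * t * √(B ^ 2 + 1)) ^ 2)
        * (D ^ 2 + a ^ 2 + b ^ 2) := by
  have hweight : a ≤ √(a ^ 2 + b ^ 2) := Real.le_sqrt_of_sq_le (by linarith [sq_nonneg b])
  have hlayer : B * a + b ≤ √(B ^ 2 + 1) * √(a ^ 2 + b ^ 2) := by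
    simpa using add_add_mul_le_sqrt_mul_sqrt B 1 0 a b 0
  have hlin : s * (W * G * D + L * a) + t * (W * L * D + B * a + b) * (W * L) ≤
      (s * W * G + t * W ^ 2 * L ^ 2) * D
        + L * (s + W * t * √(B ^ 2 + 1)) * √(a ^ 2 + b ^ 2) := by
    calc _ = (s * W * G + t * W ^ 2 * L ^ 2) * D + L * (s * a + W * t * (B * a + b)) := by ring
      _ ≤ (s * W * G + t * W ^ 2 * L ^ 2) * D
          + L * (s * √(a ^ 2 + b ^ 2) + W * t * (√(B ^ 2 + 1) * √(a ^ 2 + b ^ 2))) := by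
          gcongr
      _ = _ := by ring
  calc _ ≤ ((s * W * G + t * W ^ 2 * L ^ 2) * D
        + L * (s + W * t * √(B ^ 2 + 1)) * √(a ^ 2 + b ^ 2)) ^ 2 :=
        pow_le_pow_left₀ (by positivity) hlin 2
    _ ≤ _ := add_mul_sq_le _ _ _ _
    _ = _ := by
        rw [Real.sq_sqrt (by positivity)]
        ring

lemma weight_bias_coeff_sq_le (W s t B L D a b : ℝ) :
    (s * (L * D) + t * (W * L * D + B * a + b) * B) ^ 2 + (t * (W * L * D + B * a + b)) ^ 2 ≤
      max (3 * L ^ 2 * (s ^ 2 + t ^ 2 * W ^ 2 * B ^ 2) + 2 * t ^ 2 * W ^ 2 * L ^ 2)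
        (t ^ 2 * (B ^ 2 + 1) * (3 * B ^ 2 + 2)) * (D ^ 2 + a ^ 2 + b ^ 2) := by
  have hweight := add_add_sq_le (s * L * D) (t * B * W * L * D) (t * B * (B * a + b))
  have hbias := add_sq_le (a := t * W * L * D) (b := t * (B * a + b))
  have hlayer : (B * a + b) ^ 2 ≤ (B ^ 2 + 1) * (a ^ 2 + b ^ 2) := by
    simpa using add_mul_sq_le B 1 a b
  calc _ = (s * L * D + t * B * W * L * D + t * B * (B * a + b)) ^ 2
        + (t * W * L * D + t * (B * a + b)) ^ 2 := by ring
    _ ≤ (3 * L ^ 2 * (s ^ 2 + t ^ 2 * W ^ 2 * B ^ 2) + 2 * t ^ 2 * W ^ 2 * L ^ 2) * D ^ 2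
        + t ^ 2 * (3 * B ^ 2 + 2) * (B * a + b) ^ 2 := by linarith
    _ ≤ (3 * L ^ 2 * (s ^ 2 + t ^ 2 * W ^ 2 * B ^ 2) + 2 * t ^ 2 * W ^ 2 * L ^ 2) * D ^ 2
        + t ^ 2 * (3 * B ^ 2 + 2) * ((B ^ 2 + 1) * (a ^ 2 + b ^ 2)) := by gcongr
    _ = (3 * L ^ 2 * (s ^ 2 + t ^ 2 * W ^ 2 * B ^ 2) + 2 * t ^ 2 * W ^ 2 * L ^ 2) * D ^ 2
        + t ^ 2 * (B ^ 2 + 1) * (3 * B ^ 2 + 2) * (a ^ 2 + b ^ 2) := by ring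
    _ ≤ _ := by
        rw [add_assoc (D ^ 2), mul_add (max _ _)]
        gcongr
        · exact le_max_left _ _
        · exact le_max_right _ _

lemma sqrt_coeff_le_hiddenGradLip_mul {W s t B L G D a b : ℝ} (hW : 0 ≤ W) (hs : 0 ≤ s)
    (ht : 0 ≤ t) (hL : 0 ≤ L) (hG : 0 ≤ G) (hB : 0 ≤ B) (hD : 0 ≤ D) (ha : 0 ≤ a) (hb : 0 ≤ b) :
    √((s * (W * G * D + L * a) + t * (W * L * D + B * a + b) * (W * L)) ^ 2
        + (s * (L * D) + t * (W * L * D + B * a + b) * B) ^ 2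
        + (t * (W * L * D + B * a + b)) ^ 2) ≤
      hiddenGradLip W s t 1 B L G * √(D ^ 2 + a ^ 2 + b ^ 2) := by
  rw [hiddenGradLip, ← Real.sqrt_mul (by positivity)]
  gcongr
  have hprev := prev_coeff_sq_le hW hs ht hL hG hB hD ha hb
  have hrest := weight_bias_coeff_sq_le W s t B L D a b
  simp only [one_mul, mul_one]
  linarith

lemma norm_fderiv_comp_sub_apply_le {Φ : V → V'} {f : P → V} {s t : ℝ} {Θ Θ' : P}
    (hΦ : C11BoundOn Φ Set.univ s t) (hf : DifferentiableAt ℝ f Θ)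
    (hf' : DifferentiableAt ℝ f Θ') (H : P) :
    ‖fderiv ℝ (Φ ∘ f) Θ H - fderiv ℝ (Φ ∘ f) Θ' H‖ ≤
      s * ‖fderiv ℝ f Θ H - fderiv ℝ f Θ' H‖ + t * ‖f Θ - f Θ'‖ * ‖fderiv ℝ f Θ' H‖ := by
  have hsub : fderiv ℝ (Φ ∘ f) Θ H - fderiv ℝ (Φ ∘ f) Θ' H =
      fderiv ℝ Φ (f Θ) (fderiv ℝ f Θ H - fderiv ℝ f Θ' H)
        + (fderiv ℝ Φ (f Θ) - fderiv ℝ Φ (f Θ')) (fderiv ℝ f Θ' H) := by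
    rw [fderiv_comp _ (hΦ.differentiableAt _ trivial) hf,
      fderiv_comp _ (hΦ.differentiableAt _ trivial) hf']
    simp
  rw [hsub]
  exact norm_add_le_of_le
    (ContinuousLinearMap.le_of_opNorm_le _ (hΦ.norm_fderiv_le _ trivial) _)
    (ContinuousLinearMap.le_of_opNorm_le _ (hΦ.norm_fderiv_sub_le _ trivial _ trivial) _)

namespace LayerSplitting

variable (c : LayerSplitting P E M V) {β : M →L[ℝ] F →L[ℝ] V} {g : E → F} {Φ : V → V'}
  {W s t B L G : ℝ} {Θ Θ' : P}

lemma norm_fderiv_comp_affine_le (hβ : ‖β‖ ≤ 1) (hg : C11BoundOn g (Metric.ball 0 W) L G)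
    (hB : ∀ x ∈ Metric.ball 0 W, ‖g x‖ ≤ B) (hΦ : C11BoundOn Φ Set.univ s t)
    (hΘ : Θ ∈ Metric.ball 0 W) :
    ‖fderiv ℝ (Φ ∘ c.affine β g) Θ‖ ≤ s * affineLip W B L := by
  have haff := c.c11BoundOn_affine hβ hg hB
  have hs : 0 ≤ s := hΦ.bound_nonneg Set.univ_nonempty
  rw [fderiv_comp _ (hΦ.differentiableAt _ trivial) (haff.differentiableAt Θ hΘ)]
  refine (ContinuousLinearMap.opNorm_comp_le _ _).trans ?_
  gcongr
  · exact hΦ.norm_fderiv_le _ trivial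
  · exact haff.norm_fderiv_le Θ hΘ

lemma norm_fderiv_comp_affine_sub_le (hβ : ‖β‖ ≤ 1) (hg : C11BoundOn g (Metric.ball 0 W) L G)
    (hG : 0 ≤ G) (hB : ∀ x ∈ Metric.ball 0 W, ‖g x‖ ≤ B) (hΦ : C11BoundOn Φ Set.univ s t)
    (ht : 0 ≤ t) (hΘ : Θ ∈ Metric.ball 0 W) (hΘ' : Θ' ∈ Metric.ball 0 W) :
    ‖fderiv ℝ (Φ ∘ c.affine β g) Θ - fderiv ℝ (Φ ∘ c.affine β g) Θ'‖ ≤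
      hiddenGradLip W s t 1 B L G * ‖Θ - Θ'‖ := by
  have haff := c.c11BoundOn_affine hβ hg hB
  have hs : 0 ≤ s := hΦ.bound_nonneg Set.univ_nonempty
  have hL : 0 ≤ L := hg.bound_nonneg ⟨_, c.prev_mem_ball hΘ⟩
  have hB0 : 0 ≤ B := (norm_nonneg _).trans (hB _ (c.prev_mem_ball hΘ))
  have hW : 0 ≤ W := (norm_nonneg _).trans (c.norm_weight_le_of_mem_ball hΘ)
  refine ContinuousLinearMap.opNorm_le_bound _
    (mul_nonneg (Real.sqrt_nonneg _) (norm_nonneg _)) fun H => ?_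
  have hpre := c.norm_affine_sub_le hβ hg hB hΘ hΘ'
  have hgrad := c.norm_fderiv_affine_apply_le hβ hg hB hΘ' H
  have hgrad_sub := c.norm_fderiv_affine_sub_apply_le hβ hg hΘ hΘ' H
  set D := ‖c.prev (Θ - Θ')‖
  set a := ‖c.weight (Θ - Θ')‖
  set b := ‖c.bias (Θ - Θ')‖
  set e := W * L * D + B * a + b
  calc _ ≤ s * ‖fderiv ℝ (c.affine β g) Θ H - fderiv ℝ (c.affine β g) Θ' H‖
        + t * ‖c.affine β g Θ - c.affine β g Θ'‖ * ‖fderiv ℝ (c.affine β g) Θ' H‖ :=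
        norm_fderiv_comp_sub_apply_le hΦ (haff.differentiableAt Θ hΘ)
          (haff.differentiableAt Θ' hΘ') H
    _ ≤ s * ((W * G * D + L * a) * ‖c.prev H‖ + L * D * ‖c.weight H‖)
        + t * e * (W * L * ‖c.prev H‖ + B * ‖c.weight H‖ + ‖c.bias H‖) := by gcongr
    _ = (s * (W * G * D + L * a) + t * e * (W * L)) * ‖c.prev H‖
        + (s * (L * D) + t * e * B) * ‖c.weight H‖ + t * e * ‖c.bias H‖ := by ring
    _ ≤ _ := c.linearCombination_norm_le _ _ _ H
    _ ≤ hiddenGradLip W s t 1 B L G * √(D ^ 2 + a ^ 2 + b ^ 2) * ‖H‖ := by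
        gcongr
        exact sqrt_coeff_le_hiddenGradLip_mul hW hs ht hL hG hB0 (norm_nonneg _) (norm_nonneg _)
          (norm_nonneg _)
    _ = hiddenGradLip W s t 1 B L G * ‖Θ - Θ'‖ * ‖H‖ := by
        rw [← c.norm_sq_eq, Real.sqrt_sq (norm_nonneg _)]

lemma c11BoundOn_comp_affine (hβ : ‖β‖ ≤ 1) (hg : C11BoundOn g (Metric.ball 0 W) L G)
    (hG : 0 ≤ G) (hB : ∀ x ∈ Metric.ball 0 W, ‖g x‖ ≤ B) (hΦ : C11BoundOn Φ Set.univ s t)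
    (ht : 0 ≤ t) :
    C11BoundOn (Φ ∘ c.affine β g) (Metric.ball 0 W) (s * affineLip W B L)
      (hiddenGradLip W s t 1 B L G) where
  differentiableAt Θ hΘ := (hΦ.differentiableAt _ trivial).comp Θ
    ((c.c11BoundOn_affine hβ hg hB).differentiableAt Θ hΘ)
  norm_fderiv_le _ hΘ := c.norm_fderiv_comp_affine_le hβ hg hB hΦ hΘ
  norm_fderiv_sub_le _ hΘ _ hΘ' := c.norm_fderiv_comp_affine_sub_le hβ hg hG hB hΦ ht hΘ hΘ'

end LayerSplitting

end Layer

section MatrixVectorProduct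

variable {ι κ : Type*} [Fintype ι] [Fintype κ]

lemma norm_toLp_sum_mul_le (A : EuclideanSpace ℝ (ι × κ)) (x : EuclideanSpace ℝ κ) :
    ‖WithLp.toLp 2 fun i => ∑ j, A (i, j) * x j‖ ≤ 1 * ‖A‖ * ‖x‖ := by
  refine le_of_sq_le_sq ?_ (by positivity)
  rw [one_mul, mul_pow]
  simp only [EuclideanSpace.real_norm_sq_eq]
  rw [Fintype.sum_prod_type, Finset.sum_mul]
  exact Finset.sum_le_sum fun i _ => Finset.sum_mul_sq_le_sq_mul_sq _ _ _

/-- The matrix-vector product as a continuous bilinear map, the matrix being flattened so as to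
carry the Frobenius norm. -/
noncomputable def mulVecBilin (ι κ : Type*) [Fintype ι] [Fintype κ] :
    EuclideanSpace ℝ (ι × κ) →L[ℝ] EuclideanSpace ℝ κ →L[ℝ] EuclideanSpace ℝ ι :=
  LinearMap.mkContinuous₂
    (LinearMap.mk₂ ℝ (fun A x => WithLp.toLp 2 fun i => ∑ j, A (i, j) * x j)
      (fun A A' x => by ext i; simp [add_mul, Finset.sum_add_distrib])
      (fun r A x => by ext i; simp [Finset.mul_sum, mul_assoc])
      (fun A x x' => by ext i; simp [mul_add, Finset.sum_add_distrib])
      (fun r A x => by ext i; simp [Finset.mul_sum, mul_left_comm]))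
    1 norm_toLp_sum_mul_le

lemma norm_mulVecBilin_le : ‖mulVecBilin ι κ‖ ≤ 1 :=
  LinearMap.mkContinuous₂_norm_le _ zero_le_one norm_toLp_sum_mul_le

end MatrixVectorProduct

section Network

variable {ℓ : ℕ → ℕ} {σ : ℕ → ℝ → ℝ} {ζ : Fin (ℓ 0) → ℝ} {u : ℕ}
  {σmax σ'max σ''max W S B L G : ℝ}

/-- The splitting of the parameters `Θ_{u+1}` into `Θ_u`, `A^{(u+1)}` and `b^{(u+1)}`. -/
noncomputable def lastLayer (ℓ : ℕ → ℕ) (u : ℕ) :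
    LayerSplitting (ParamSpace ℓ (u + 1)) (ParamSpace ℓ u)
      (EuclideanSpace ℝ (Fin (ℓ (u + 1)) × Fin (ℓ u))) (EuclideanSpace ℝ (Fin (ℓ (u + 1)))) where
  prev := LinearMap.toContinuousLinearMap
    { toFun := trunc
      map_add' := fun _ _ => rfl
      map_smul' := fun _ _ => rfl }
  weight := LinearMap.toContinuousLinearMap
    { toFun := fun Θ => WithLp.toLp 2 fun p => Θ ⟨⟨u, Nat.lt_succ_self u⟩, Sum.inl p⟩
      map_add' := fun _ _ => rfl
      map_smul' := fun _ _ => rfl }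
  bias := LinearMap.toContinuousLinearMap
    { toFun := fun Θ => WithLp.toLp 2 fun i => Θ ⟨⟨u, Nat.lt_succ_self u⟩, Sum.inr i⟩
      map_add' := fun _ _ => rfl
      map_smul' := fun _ _ => rfl }
  norm_sq_eq Θ := by
    simp only [EuclideanSpace.real_norm_sq_eq]
    rw [Fintype.sum_sigma, Fin.sum_univ_castSucc, Fintype.sum_sigma, Fintype.sum_sum_type,
      ← add_assoc]
    rfl

lemma netFull_eq_affine :
    netFull ℓ σ ζ u = (lastLayer ℓ u).affine (mulVecBilin _ _) (net ℓ σ ζ u) := rfl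

lemma net_succ_eq_comp :
    net ℓ σ ζ (u + 1) = componentwise (σ (u + 1)) ∘
      (lastLayer ℓ u).affine (mulVecBilin _ _) (net ℓ σ ζ u) := rfl

lemma norm_net_succ_le (hσ : ∀ x, |σ (u + 1) x| ≤ σmax) (Θ : ParamSpace ℓ (u + 1)) :
    ‖net ℓ σ ζ (u + 1) Θ‖ ≤ BN ℓ σmax (u + 1) := by
  simpa [BN, net_succ_eq_comp] using
    norm_componentwise_le hσ ((lastLayer ℓ u).affine (mulVecBilin _ _) (net ℓ σ ζ u) Θ)

lemma norm_net_zero (Θ : ParamSpace ℓ 0) : ‖net ℓ σ ζ 0 Θ‖ = √(∑ j, ζ j ^ 2) := by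
  simp [net, EuclideanSpace.norm_eq]

lemma LN_one : LN ℓ σmax σ'max W S 1 = σ'max * affineLip W S 0 := by
  simp [LN, affineLip]

lemma LgN_one (ht : 0 ≤ σ''max) :
    LgN ℓ σmax σ'max σ''max W S 1 = hiddenGradLip W σ'max σ''max (ℓ 1) S 0 0 := by
  have hmax : 0 ≤ σ''max ^ 2 * (S ^ 2 + 1) * (3 * S ^ 2 + 2) := by positivity
  have hsqrt : hiddenGradLip W σ'max σ''max (ℓ 1) S 0 0 =
      √(σ''max ^ 2 * ((S ^ 2 + 1) * (3 * S ^ 2 + 2))) := by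
    simp [hiddenGradLip, max_eq_right hmax, ← mul_assoc]
  rw [hsqrt, Real.sqrt_mul (sq_nonneg _), Real.sqrt_sq ht, LgN]

lemma LgN_nonneg (ht : 0 ≤ σ''max) : ∀ u, 0 ≤ LgN ℓ σmax σ'max σ''max W S u
  | 0 => le_rfl
  | 1 => mul_nonneg ht (Real.sqrt_nonneg _)
  | _ + 2 => Real.sqrt_nonneg _

lemma c11BoundOn_net_succ (hnet : C11BoundOn (net ℓ σ ζ u) (Metric.ball 0 W) L G) (hG : 0 ≤ G)
    (hB : ∀ Θ ∈ Metric.ball 0 W, ‖net ℓ σ ζ u Θ‖ ≤ B)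
    (hσ : C11BoundOn (σ (u + 1)) Set.univ σ'max σ''max) :
    C11BoundOn (net ℓ σ ζ (u + 1)) (Metric.ball 0 W) (σ'max * affineLip W B L)
      (hiddenGradLip W σ'max σ''max (ℓ (u + 1)) B L G) := by
  have hs : 0 ≤ σ'max := hσ.bound_nonneg Set.univ_nonempty
  have ht : 0 ≤ σ''max := hσ.lipschitz_nonneg Set.nontrivial_univ
  rw [net_succ_eq_comp]
  refine ((lastLayer ℓ u).c11BoundOn_comp_affine norm_mulVecBilin_le hnet hG hB
    (c11BoundOn_componentwise hσ) ht).mono_of_one_le_dim (Real.sqrt_nonneg _) fun hball hl => ?_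
  exact hiddenGradLip_mono (Metric.nonempty_ball.1 hball).le hs ht hG zero_le_one
    (Nat.one_le_cast.2 hl)

lemma c11BoundOn_net (hσb : ∀ u x, |σ u x| ≤ σmax)
    (hσ : ∀ u, C11BoundOn (σ u) Set.univ σ'max σ''max) (hS : S = √(∑ j, ζ j ^ 2)) (hu : 1 ≤ u) :
    C11BoundOn (net ℓ σ ζ u) (Metric.ball 0 W) (LN ℓ σmax σ'max W S u)
      (LgN ℓ σmax σ'max σ''max W S u) := by
  have ht : 0 ≤ σ''max := (hσ 0).lipschitz_nonneg Set.nontrivial_univ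
  induction u, hu using Nat.le_induction with
  | base =>
    rw [LN_one, LgN_one ht]
    exact c11BoundOn_net_succ (c11BoundOn_const _) le_rfl
      (fun Θ _ => (norm_net_zero Θ).trans_le hS.ge) (hσ 1)
  | succ u hu ih =>
    obtain ⟨k, rfl⟩ := Nat.exists_eq_add_of_le' hu
    exact c11BoundOn_net_succ ih (LgN_nonneg ht _) (fun Θ _ => norm_net_succ_le (hσb _) Θ) (hσ _)

lemma c11BoundOn_netFull (hnet : C11BoundOn (net ℓ σ ζ u) (Metric.ball 0 W) L G)
    (hB : ∀ Θ ∈ Metric.ball 0 W, ‖net ℓ σ ζ u Θ‖ ≤ B) :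
    C11BoundOn (netFull ℓ σ ζ u) (Metric.ball 0 W) (affineLip W B L)
      √(3 * L ^ 2 * ℓ (u + 1) + ℓ (u + 1) ^ 2 * W ^ 2 * G ^ 2 + L ^ 2 * ℓ (u + 1) ^ 2) := by
  rw [netFull_eq_affine]
  refine ((lastLayer ℓ u).c11BoundOn_affine norm_mulVecBilin_le hnet hB).mono_of_one_le_dim
    (Real.sqrt_nonneg _) fun _ hl => Real.sqrt_le_sqrt ?_
  have hl' : (1 : ℝ) ≤ ℓ (u + 1) := Nat.one_le_cast.2 hl
  calc W ^ 2 * G ^ 2 + 2 * L ^ 2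
      ≤ 3 * L ^ 2 * 1 + 1 ^ 2 * W ^ 2 * G ^ 2 + L ^ 2 * 1 ^ 2 := by linarith [sq_nonneg L]
    _ ≤ _ := by gcongr

end Network

end FeedForward

theorem statement8_general (m : ℕ) (hm : 1 ≤ m) (ℓ : ℕ → ℕ) (σ : ℕ → ℝ → ℝ)
    (σmax σ'max σ''max BΩ : ℝ) (hσb : ∀ u x, |σ u x| ≤ σmax)
    (hσ : ∀ u, FeedForward.C11BoundOn (σ u) Set.univ σ'max σ''max)
    (ζ : Fin (ℓ 0) → ℝ) (S : ℝ) (hS : S = Real.sqrt (∑ j, (ζ j) ^ 2)) :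
    (∀ Θ Θ' : ParamSpace ℓ (m + 1), ‖Θ‖ < BΩ → ‖Θ'‖ < BΩ →
      ‖netFull ℓ σ ζ m Θ - netFull ℓ σ ζ m Θ'‖
        ≤ Real.sqrt (BΩ ^ 2 * (LN ℓ σmax σ'max BΩ S m) ^ 2 + (BN ℓ σmax m) ^ 2 + 1) *
          ‖Θ - Θ'‖) ∧
    (∀ Θ : ParamSpace ℓ (m + 1), ‖Θ‖ < BΩ →
      ‖fderiv ℝ (netFull ℓ σ ζ m) Θ‖
        ≤ Real.sqrt (BΩ ^ 2 * (LN ℓ σmax σ'max BΩ S m) ^ 2 + (BN ℓ σmax m) ^ 2 + 1)) ∧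
    (∀ Θ Θ' : ParamSpace ℓ (m + 1), ‖Θ‖ < BΩ → ‖Θ'‖ < BΩ →
      ‖fderiv ℝ (netFull ℓ σ ζ m) Θ - fderiv ℝ (netFull ℓ σ ζ m) Θ'‖
        ≤ Real.sqrt (3 * (LN ℓ σmax σ'max BΩ S m) ^ 2 * (ℓ (m + 1) : ℝ)
            + (ℓ (m + 1) : ℝ) ^ 2 * BΩ ^ 2 * (LgN ℓ σmax σ'max σ''max BΩ S m) ^ 2
            + (LN ℓ σmax σ'max BΩ S m) ^ 2 * (ℓ (m + 1) : ℝ) ^ 2) * ‖Θ - Θ'‖) := by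
  obtain ⟨k, rfl⟩ := Nat.exists_eq_add_of_le' hm
  have hnet := FeedForward.c11BoundOn_net (W := BΩ) hσb hσ hS hm
  have hfull := FeedForward.c11BoundOn_netFull hnet
    fun Θ _ => FeedForward.norm_net_succ_le (hσb _) Θ
  simp only [← mem_ball_zero_iff]
  exact ⟨fun _ _ hΘ hΘ' => hfull.norm_sub_le (convex_ball 0 BΩ) hΘ hΘ', hfull.norm_fderiv_le,
    fun Θ Θ' hΘ hΘ' => hfull.norm_fderiv_sub_le Θ hΘ Θ' hΘ'⟩

/-- the full network map N and its gradient ∇N are Lipschitz continuous on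
{‖Θ‖ < B_Ω} with constants L_N = √(B_Ω²L_{N_m}² + B_{N_m}² + 1) and
L_{∇N} = √(3L_{N_m}²ℓ_{m+1} + ℓ_{m+1}²B_Ω²L_{∇N_m}² + L_{N_m}²ℓ_{m+1}²), and ∇N is
uniformly bounded by B_{∇N} = L_N. -/
theorem statement8 (m : ℕ) (hm : 1 ≤ m) (ℓ : ℕ → ℕ) (σ : ℕ → ℝ → ℝ)
    (σmax σ'max σ''max BΩ : ℝ) (hBΩ : 0 < BΩ)
    (hσd : ∀ u, Differentiable ℝ (σ u)) (hσd2 : ∀ u, Differentiable ℝ (deriv (σ u)))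
    (hσb : ∀ u x, |σ u x| ≤ σmax) (hσ' : ∀ u x, |deriv (σ u) x| ≤ σ'max)
    (hσ'' : ∀ u x, |deriv (deriv (σ u)) x| ≤ σ''max)
    (ζ : Fin (ℓ 0) → ℝ) (S : ℝ) (hS : S = Real.sqrt (∑ j, (ζ j) ^ 2)) :
    (∀ Θ Θ' : ParamSpace ℓ (m + 1), ‖Θ‖ < BΩ → ‖Θ'‖ < BΩ →
      ‖netFull ℓ σ ζ m Θ - netFull ℓ σ ζ m Θ'‖
        ≤ Real.sqrt (BΩ ^ 2 * (LN ℓ σmax σ'max BΩ S m) ^ 2 + (BN ℓ σmax m) ^ 2 + 1) *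
          ‖Θ - Θ'‖) ∧
    (∀ Θ : ParamSpace ℓ (m + 1), ‖Θ‖ < BΩ →
      ‖fderiv ℝ (netFull ℓ σ ζ m) Θ‖
        ≤ Real.sqrt (BΩ ^ 2 * (LN ℓ σmax σ'max BΩ S m) ^ 2 + (BN ℓ σmax m) ^ 2 + 1)) ∧
    (∀ Θ Θ' : ParamSpace ℓ (m + 1), ‖Θ‖ < BΩ → ‖Θ'‖ < BΩ →
      ‖fderiv ℝ (netFull ℓ σ ζ m) Θ - fderiv ℝ (netFull ℓ σ ζ m) Θ'‖
        ≤ Real.sqrt (3 * (LN ℓ σmax σ'max BΩ S m) ^ 2 * (ℓ (m + 1) : ℝ)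
            + (ℓ (m + 1) : ℝ) ^ 2 * BΩ ^ 2 * (LgN ℓ σmax σ'max σ''max BΩ S m) ^ 2
            + (LN ℓ σmax σ'max BΩ S m) ^ 2 * (ℓ (m + 1) : ℝ) ^ 2) * ‖Θ - Θ'‖) :=
  statement8_general m hm ℓ σ σmax σ'max σ''max BΩ hσb
    (fun u => .of_deriv (hσd u) (hσ' u) (hσd2 u) (hσ'' u)) ζ S hS
end
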